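/- arXiv:2108.00711 — 4 statements merged into one kernel-verified Lean document; each statement's English description precedes it below -/
import Mathlib

section
/- Let N ≥ 1 and T ∈ ℕ. Suppose f : ℤ^N × ℝ → ℝ is continuous in the second variable and satisfies the growth condition |f(x,u)| ≤ a(|u| + |u|^{q−1}) for some a > 0 and q > 2, together with: (i) V and f(·,u) are T-periodic in x (V(x+Te_i) = V(x) and f(x+Te_i,u) = f(x,u) for all x, u and 1 ≤ i ≤ N) and V(x) > 0 for all x; (ii) f(x,u) = o(u) uniformly in x as u → 0; (iii) for each x, u ↦ f(x,u)/|u| is strictly increasing on (−∞,0) and on (0,∞); (iv) F(x,u)/u² → ∞ uniformly in x as |u| → ∞, where F(x,u) = ∫₀ᵘ f(x,s) ds. (Periodicity and positivity of V give 0 < C₁ ≤ V ≤ C₂.) Then the equation −Δu + V(x)u = f(x,u) has a ground state solution in H¹(ℤ^N): there exists a nonzero u ∈ H¹(ℤ^N) with Φ'(u) = 0 and Φ(u) = inf{Φ(v) : v ∈ H¹(ℤ^N)\{0}, Φ'(v)v = 0}. -/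
open scoped ENNReal

noncomputable section

/-- `H¹(V)`: as a set, the ℓ²-summable real functions on the vertex set;
the `H¹` norm is equivalent to the ℓ² norm by the uniform degree bound. -/
abbrev H1 (Vtx : Type*) := lp (fun _ : Vtx => ℝ) 2

variable {Vtx : Type*}

/-- `Γ(u,v)(x) = (1/2) Σ_{y∼x} (u(y)-u(x))(v(y)-v(x))`. -/
def gammaProd (adj : Vtx → Vtx → Prop) (u v : Vtx → ℝ) (x : Vtx) : ℝ :=
  (1/2) * ∑' y : {y : Vtx // adj x y}, (u y.1 - u x) * (v y.1 - v x)

/-- `|∇u|²(x) = (1/2) Σ_{y∼x} (u(y)-u(x))²`. -/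
def gradSq (adj : Vtx → Vtx → Prop) (u : Vtx → ℝ) (x : Vtx) : ℝ :=
  gammaProd adj u u x

/-- `Δu(x) = Σ_{y∼x} (u(y)-u(x))`. -/
def graphLap (adj : Vtx → Vtx → Prop) (u : Vtx → ℝ) (x : Vtx) : ℝ :=
  ∑' y : {y : Vtx // adj x y}, (u y.1 - u x)

/-- the norm `‖u‖` induced by the potential `V`:
`‖u‖² = Σ_x (|∇u|²(x) + V(x)u(x)²)`. -/
def nrmV (adj : Vtx → Vtx → Prop) (Vp : Vtx → ℝ) (u : Vtx → ℝ) : ℝ :=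
  Real.sqrt (∑' x, (gradSq adj u x + Vp x * (u x)^2))

/-- the `V`-norm of an element of `H¹`. -/
def nrmH (adj : Vtx → Vtx → Prop) (Vp : Vtx → ℝ) (u : H1 Vtx) : ℝ :=
  nrmV adj Vp (fun y => u y)

/-- `⟨u,v⟩ = Σ_x (Γ(u,v)(x) + V(x)u(x)v(x))`. -/
def iprodH (adj : Vtx → Vtx → Prop) (Vp : Vtx → ℝ) (u v : H1 Vtx) : ℝ :=
  ∑' x, (gammaProd adj (fun y => u y) (fun y => v y) x + Vp x * u x * v x)

/-- the variational functional `Φ(u) = ½‖u‖² − Σ_x F(x,u(x))`. -/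
def PhiF (adj : Vtx → Vtx → Prop) (Vp : Vtx → ℝ) (F : Vtx → ℝ → ℝ) (u : H1 Vtx) : ℝ :=
  (1/2) * ∑' x, (gradSq adj (fun y => u y) x + Vp x * (u x)^2) - ∑' x, F x (u x)

/-- the Nehari manifold `N = {u ∈ H¹\{0} : Φ'(u)u = 0}`. -/
def Nehari (adj : Vtx → Vtx → Prop) (Vp : Vtx → ℝ) (F : Vtx → ℝ → ℝ) : Set (H1 Vtx) :=
  {u | u ≠ 0 ∧ fderiv ℝ (PhiF adj Vp F) u u = 0}

/-- adjacency of the lattice graph `ℤ^N`. -/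
def adjZ (N : ℕ) (x y : Fin N → ℤ) : Prop := (∑ i, (x i - y i).natAbs) = 1

end

section Aux

open Filter Topology

/-- The scalar facts on the nonlinearity which are used in the variational argument. -/
structure FH {X : Type*} (f F : X → ℝ → ℝ) : Prop where
  cont : ∀ x, Continuous (f x)
  lip : ∀ M : ℝ, 0 ≤ M → ∃ L : ℝ, 0 ≤ L ∧ ∀ x s, |s| ≤ M → |f x s| ≤ L * |s|
  small : ∀ ε > 0, ∃ δ > 0, ∀ x t, |t| < δ → |f x t| ≤ ε * |t|
  mono : ∀ x v s t, v ≠ 0 → 0 < s → s < t → f x (s * v) * v / s < f x (t * v) * v / t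
  deriv : ∀ x t, HasDerivAt (F x) (f x t) t
  F0 : ∀ x, F x 0 = 0
  Fnn : ∀ x t, 0 ≤ F x t
  super : ∀ M : ℝ, ∃ R > 0, ∀ x t, R ≤ |t| → M * t ^ 2 ≤ F x t

theorem FH_of {X : Type*} (f : X → ℝ → ℝ) (hcont : ∀ x, Continuous (f x))
    (a q : ℝ) (ha : 0 < a) (hq : 2 < q)
    (hgrowth : ∀ x t, |f x t| ≤ a * (|t| + |t| ^ (q - 1)))
    (hsmall : ∀ ε > 0, ∃ δ > 0, ∀ x t, t ≠ 0 → |t| < δ → |f x t| ≤ ε * |t|)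
    (hmono : ∀ x, StrictMonoOn (fun t => f x t / |t|) (Set.Iio 0) ∧
             StrictMonoOn (fun t => f x t / |t|) (Set.Ioi 0))
    (F : X → ℝ → ℝ) (hF : ∀ x t, F x t = ∫ s in (0:ℝ)..t, f x s)
    (hsuper : ∀ M : ℝ, ∃ R > 0, ∀ x t, R ≤ |t| → M ≤ F x t / t ^ 2) : FH f F := by
  have hf0 : ∀ x, f x 0 = 0 := by
    intro x
    have h := hgrowth x 0
    rw [abs_zero, Real.zero_rpow (by linarith)] at h
    simpa using h
  have hmono2 : ∀ x v s t, v ≠ 0 → 0 < s → s < t → f x (s * v) * v / s < f x (t * v) * v / t := by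
    intro x v s t hv hs hst
    have ht : 0 < t := hs.trans hst
    rcases lt_or_gt_of_ne hv with h | h
    · have h1 := (hmono x).1 (show t * v ∈ Set.Iio 0 from mul_neg_of_pos_of_neg ht h)
        (show s * v ∈ Set.Iio 0 from mul_neg_of_pos_of_neg hs h) (by nlinarith)
      simp only [abs_mul, abs_of_pos hs, abs_of_pos ht, abs_of_neg h] at h1
      have e1 : f x (s * v) * v / s = - (v ^ 2 * (f x (s * v) / (s * -v))) := by
        field_simp
      have e2 : f x (t * v) * v / t = - (v ^ 2 * (f x (t * v) / (t * -v))) := by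
        field_simp
      rw [e1, e2]
      have : 0 < v ^ 2 := by positivity
      nlinarith
    · have h1 := (hmono x).2 (show s * v ∈ Set.Ioi 0 from mul_pos hs h)
        (show t * v ∈ Set.Ioi 0 from mul_pos ht h) (by nlinarith)
      simp only [abs_mul, abs_of_pos hs, abs_of_pos ht, abs_of_pos h] at h1
      have e1 : f x (s * v) * v / s = (v ^ 2 * (f x (s * v) / (s * v))) := by
        field_simp
      have e2 : f x (t * v) * v / t = (v ^ 2 * (f x (t * v) / (t * v))) := by
        field_simp
      rw [e1, e2]
      have : 0 < v ^ 2 := by positivity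
      nlinarith
  have hsmall2 : ∀ ε > 0, ∃ δ > 0, ∀ x t, |t| < δ → |f x t| ≤ ε * |t| := by
    intro ε hε
    obtain ⟨δ, hδ, h⟩ := hsmall ε hε
    refine ⟨δ, hδ, fun x t ht => ?_⟩
    by_cases h0 : t = 0
    · simp [h0, hf0]
    · exact h x t h0 ht
  have hsign : ∀ x t, 0 ≤ f x t * t := by
    intro x v
    by_cases hv : v = 0
    · simp [hv]
    by_contra! hneg
    have hv2 : 0 < v ^ 2 := by positivity
    obtain ⟨δ, hδ, h⟩ := hsmall2 (- (f x v * v) / v ^ 2) (div_pos (by linarith) hv2)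
    have hav : 0 < |v| := abs_pos.2 hv
    obtain ⟨s, hs0, hs1⟩ : ∃ s : ℝ, 0 < s ∧ s < min 1 (δ / |v|) :=
      exists_between (lt_min one_pos (div_pos hδ hav))
    have hs2 := lt_of_lt_of_le hs1 (min_le_left _ _)
    have hs3 := lt_of_lt_of_le hs1 (min_le_right _ _)
    have h1 := h x (s * v) (by rw [abs_mul, abs_of_pos hs0]; exact (lt_div_iff₀ hav).1 hs3)
    have h2 := hmono2 x v s 1 hv hs0 hs2
    rw [one_mul, div_one, div_lt_iff₀ hs0] at h2
    have h3 : |f x (s * v) * v| ≤ - (f x v * v) * s := by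
      rw [abs_mul]
      calc _ ≤ (- (f x v * v) / v ^ 2 * |s * v|) * |v| := by gcongr
        _ = _ := by
          rw [abs_mul, abs_of_pos hs0, ← sq_abs v]; field_simp
    have h4 := neg_abs_le (f x (s * v) * v)
    nlinarith
  refine ⟨hcont, ?_, hsmall2, hmono2, ?_, ?_, ?_, ?_⟩
  · intro M hM
    refine ⟨a * (1 + M ^ (q - 2)), by positivity, fun x s hs => (hgrowth x s).trans ?_⟩
    have : |s| ^ (q - 1) ≤ M ^ (q - 2) * |s| := by
      have e : q - 1 = (q - 2) + 1 := by ring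
      rw [e, Real.rpow_add_one' (abs_nonneg s) (by linarith)]
      gcongr
    rw [mul_assoc]
    gcongr
    linarith
  · intro x t
    have : F x = fun t => ∫ s in (0:ℝ)..t, f x s := funext (hF x)
    rw [this]
    exact intervalIntegral.integral_hasDerivAt_right ((hcont x).intervalIntegrable _ _)
      ((hcont x).stronglyMeasurableAtFilter _ _) (hcont x).continuousAt
  · intro x; simp [hF]
  · intro x t
    rw [hF]
    rcases le_total 0 t with h | h
    · apply intervalIntegral.integral_nonneg h
      intro s hs
      rcases hs.1.eq_or_lt with h0 | h0
      · rw [← h0, hf0]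
      · exact nonneg_of_mul_nonneg_left (hsign x s) h0
    · rw [intervalIntegral.integral_symm, ← intervalIntegral.integral_neg]
      apply intervalIntegral.integral_nonneg h
      intro s hs
      rcases hs.2.eq_or_lt with h0 | h0
      · rw [h0, hf0, neg_zero]
      · have := hsign x s
        by_contra! hh
        nlinarith
  · intro M
    obtain ⟨R, hR, h⟩ := hsuper M
    refine ⟨R, hR, fun x t ht => ?_⟩
    have ht0 : 0 < |t| := hR.trans_le ht
    have : 0 < t ^ 2 := by rw [← sq_abs]; positivity
    exact (le_div_iff₀ this).1 (h x t ht)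

theorem FH.f0 {X : Type*} {f F : X → ℝ → ℝ} (h : FH f F) (x : X) : f x 0 = 0 := by
  obtain ⟨L, _, hL⟩ := h.lip 0 le_rfl
  simpa using hL x 0 (by simp)

/-- increment bound -/
theorem FH.incr {X : Type*} {f F : X → ℝ → ℝ} (h : FH f F) {M L : ℝ} (hL0 : 0 ≤ L) (x : X)
    (hL : ∀ s, |s| ≤ M → |f x s| ≤ L * |s|) (a b : ℝ) (hab : |a| + |b| ≤ M) :
    |F x (a + b) - F x a| ≤ L * (|a| + |b|) * |b| := by
  have key := (convex_closedBall (0:ℝ) (|a| + |b|)).norm_image_sub_le_of_norm_hasDerivWithin_le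
    (f := F x) (f' := f x) (C := L * (|a| + |b|)) (x := a) (y := a + b)
    (fun s _ => (h.deriv x s).hasDerivWithinAt) ?_ ?_ ?_
  · simpa using key
  · intro s hs
    have hs : |s| ≤ |a| + |b| := by simpa using hs
    exact (hL s (hs.trans hab)).trans (by gcongr)
  · simp
  · simpa using abs_add_le a b

theorem FH.Fle {X : Type*} {f F : X → ℝ → ℝ} (h : FH f F) {M L : ℝ} (hL0 : 0 ≤ L) (x : X)
    (hL : ∀ s, |s| ≤ M → |f x s| ≤ L * |s|) (b : ℝ) (hb : |b| ≤ M) :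
    F x b ≤ L * b ^ 2 := by
  have := h.incr hL0 x hL 0 b (by simpa using hb)
  rw [zero_add, abs_zero, zero_add, h.F0, sub_zero, abs_of_nonneg (h.Fnn x b), mul_assoc,
    ← sq, sq_abs] at this
  exact this

theorem FH.split {X : Type*} {f F : X → ℝ → ℝ} (h : FH f F) {M L : ℝ} (hL0 : 0 ≤ L) (x : X)
    (hL : ∀ s, |s| ≤ M → |f x s| ≤ L * |s|) (a b : ℝ) (hab : |a| + |b| ≤ M) :
    |F x (a + b) - F x a - F x b| ≤ 3 * L * (|a| * |b|) := by
  wlog hle : |b| ≤ |a| generalizing a b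
  · have := this b a (by linarith) (le_of_not_ge hle)
    rw [add_comm a b, mul_comm |a|, sub_right_comm]
    exact this
  have h1 := h.incr hL0 x hL a b hab
  have h2 := h.Fle hL0 x hL b (by linarith [abs_nonneg a])
  have h3 := h.Fnn x b
  have h4 : |F x (a + b) - F x a - F x b| ≤ |F x (a + b) - F x a| + |F x b| := abs_sub _ _
  rw [abs_of_nonneg h3] at h4
  rw [← sq_abs b] at h2
  have h5 : L * (|b| * |b|) ≤ L * (|a| * |b|) := by gcongr
  nlinarith

section L2

variable {X : Type*}

theorem H1.memlp_comp (e : X ≃ X) (u : H1 X) : Memℓp (fun x => u (e x)) 2 := by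
  have h := (lp.memℓp u).summable (by norm_num)
  exact memℓp_gen ((e.summable_iff).2 h)

theorem H1.inner_def (u v : H1 X) : inner ℝ u v = ∑' x, u x * v x := by
  rw [lp.inner_eq_tsum]
  exact tsum_congr fun x => by simp [mul_comm]

theorem H1.summable_mul (u v : H1 X) : Summable fun x => u x * v x := by
  have := lp.summable_inner (𝕜 := ℝ) v u
  simpa using this

theorem H1.hasSum_mul (u v : H1 X) : HasSum (fun x => u x * v x) (inner ℝ u v) := by
  rw [H1.inner_def]; exact (H1.summable_mul u v).hasSum

theorem H1.norm_sq (u : H1 X) : ‖u‖ ^ 2 = ∑' x, u x ^ 2 := by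
  rw [← real_inner_self_eq_norm_sq, H1.inner_def]
  exact tsum_congr fun x => by ring

theorem H1.summable_sq (u : H1 X) : Summable fun x => u x ^ 2 := by
  simpa [sq] using H1.summable_mul u u

theorem H1.abs_le (u : H1 X) (x : X) : |u x| ≤ ‖u‖ := by
  simpa using lp.norm_apply_le_norm (by norm_num) u x

theorem H1.norm_mono {u v : H1 X} (h : ∀ x, |u x| ≤ |v x|) : ‖u‖ ≤ ‖v‖ := by
  rw [← abs_norm u, ← abs_norm v]
  apply sq_le_sq.1
  rw [H1.norm_sq, H1.norm_sq]
  exact (H1.summable_sq u).tsum_le_tsum (fun x => sq_le_sq.2 (h x)) (H1.summable_sq v)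

/-- translation-type operators -/
noncomputable def compL (e : X ≃ X) : H1 X →L[ℝ] H1 X :=
  LinearMap.mkContinuous
    { toFun := fun u => ⟨fun x => u (e x), H1.memlp_comp e u⟩
      map_add' := fun u v => by ext x; rfl
      map_smul' := fun c u => by ext x; rfl } 1 (by
    intro u
    rw [one_mul]
    apply le_of_sq_le_sq _ (norm_nonneg _)
    rw [H1.norm_sq, H1.norm_sq]
    exact (e.tsum_eq (fun x => u x ^ 2)).le)

theorem compL_apply (e : X ≃ X) (u : H1 X) (x : X) : compL e u x = u (e x) := rfl

/-- multiplication by a bounded function -/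
noncomputable def mulL (m : X → ℝ) (C : ℝ) (hC : 0 ≤ C) (hm : ∀ x, |m x| ≤ C) : H1 X →L[ℝ] H1 X :=
  LinearMap.mkContinuous
    { toFun := fun u => ⟨fun x => m x * u x, by
        refine Memℓp.mono' ((lp.memℓp u).const_smul C) fun x => ?_
        simp only [Pi.smul_apply, smul_eq_mul, norm_mul, Real.norm_eq_abs, abs_of_nonneg hC]
        gcongr
        exact hm x⟩
      map_add' := fun u v => by ext x; exact mul_add _ _ _
      map_smul' := fun c u => by ext x; exact mul_left_comm _ _ _ } C (by
    intro u
    have : C * ‖u‖ = ‖C • u‖ := by rw [norm_smul, Real.norm_eq_abs, abs_of_nonneg hC]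
    rw [this]
    refine H1.norm_mono fun x => ?_
    change |m x * u x| ≤ |C * u x|
    rw [abs_mul, abs_mul, abs_of_nonneg hC]
    gcongr
    exact hm x)

theorem mulL_apply (m : X → ℝ) (C : ℝ) (hC : 0 ≤ C) (hm : ∀ x, |m x| ≤ C) (u : H1 X) (x : X) :
    mulL m C hC hm u x = m x * u x := rfl

noncomputable def absH (u : H1 X) : H1 X :=
  ⟨fun x => |u x|, Memℓp.mono' (lp.memℓp u) fun x => by simp⟩

theorem absH_apply (u : H1 X) (x : X) : absH u x = |u x| := rfl

theorem norm_absH (u : H1 X) : ‖absH u‖ ≤ ‖u‖ := H1.norm_mono fun x => by simp [absH_apply]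

/-- truncation to a finite set -/
noncomputable def truncH (S : Finset X) (u : H1 X) : H1 X := by
  classical exact ∑ x ∈ S, lp.single 2 x (u x)

theorem truncH_apply_mem {S : Finset X} (u : H1 X) {x : X} (hx : x ∈ S) : truncH S u x = u x := by
  classical
  simp only [truncH, lp.coeFn_sum, Finset.sum_apply, lp.coeFn_single]
  rw [Finset.sum_eq_single x] <;> simp_all

theorem truncH_apply_notMem {S : Finset X} (u : H1 X) {x : X} (hx : x ∉ S) : truncH S u x = 0 := by
  classical
  simp only [truncH, lp.coeFn_sum, Finset.sum_apply, lp.coeFn_single]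
  refine Finset.sum_eq_zero fun y hy => ?_
  rw [Pi.single_eq_of_ne]
  rintro rfl; exact hx hy

theorem truncH_tendsto (u : H1 X) : Tendsto (fun S => truncH S u) atTop (𝓝 u) := by
  classical
  have := lp.hasSum_single (p := 2) (by norm_num) u
  rw [HasSum, SummationFilter.unconditional_filter] at this
  exact this

theorem inner_truncH (S : Finset X) (u v : H1 X) :
    inner ℝ (truncH S u) v = ∑ x ∈ S, u x * v x := by
  rw [H1.inner_def, tsum_eq_sum (s := S)]
  · exact Finset.sum_congr rfl fun x hx => by rw [truncH_apply_mem u hx]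
  · intro x hx
    rw [truncH_apply_notMem u hx, zero_mul]

theorem norm_sub_truncH_le (S : Finset X) (u : H1 X) : ‖u - truncH S u‖ ≤ ‖u‖ := by
  refine H1.norm_mono fun x => ?_
  rw [lp.coeFn_sub, Pi.sub_apply]
  by_cases hx : x ∈ S
  · simp [truncH_apply_mem u hx]
  · simp [truncH_apply_notMem u hx]

theorem truncH_sub (S : Finset X) (u v : H1 X) : truncH S (u - v) = truncH S u - truncH S v := by
  ext x
  rw [lp.coeFn_sub, Pi.sub_apply]
  by_cases hx : x ∈ S
  · simp [truncH_apply_mem _ hx]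
  · simp [truncH_apply_notMem _ hx]

/-- bounded + pointwise convergence to zero implies weak convergence to zero -/
theorem weak_tendsto (z : H1 X) (w : ℕ → H1 X) (C : ℝ) (hC : ∀ n, ‖w n‖ ≤ C)
    (hw : ∀ x, Tendsto (fun n => w n x) atTop (𝓝 0)) :
    Tendsto (fun n => inner ℝ z (w n)) atTop (𝓝 0) := by
  have hC0 : 0 ≤ C := (norm_nonneg _).trans (hC 0)
  rw [Metric.tendsto_nhds]
  intro ε hε
  have h1 := (Metric.tendsto_nhds.1 (truncH_tendsto z)) (ε / (2 * (C + 1))) (by positivity)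
  obtain ⟨S, hS⟩ := h1.exists
  have h2 : Tendsto (fun n => inner ℝ (truncH S z) (w n)) atTop (𝓝 0) := by
    simp only [inner_truncH]
    have := tendsto_finsetSum S fun x (_ : x ∈ S) => (hw x).const_mul (z x)
    simpa using this
  filter_upwards [(Metric.tendsto_nhds.1 h2) (ε / 2) (by positivity)] with n hn
  rw [dist_zero_right, Real.norm_eq_abs] at hn ⊢
  have e : inner ℝ z (w n) = inner ℝ (truncH S z) (w n) + inner ℝ (z - truncH S z) (w n) := by
    rw [← inner_add_left]; congr 1; abel
  rw [dist_comm, dist_eq_norm] at hS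
  have h3 : |inner ℝ (z - truncH S z) (w n)| ≤ ε / 2 := by
    refine (abs_real_inner_le_norm _ _).trans ?_
    calc _ ≤ ε / (2 * (C + 1)) * (C + 1) := by
          gcongr
          linarith [hC n]
      _ = ε / 2 := by field_simp
  rw [e]
  calc _ ≤ _ := abs_add_le _ _
    _ < ε / 2 + ε / 2 := add_lt_add_of_lt_of_le hn h3
    _ = ε := by ring

/-- compactness: bounded sequences have pointwise convergent subsequences with limit in ℓ² -/
theorem exists_subseq [Countable X] (u : ℕ → H1 X) (C : ℝ) (hC : ∀ n, ‖u n‖ ≤ C) :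
    ∃ (v : H1 X) (φ : ℕ → ℕ), StrictMono φ ∧ ‖v‖ ≤ C ∧
      ∀ x, Tendsto (fun n => u (φ n) x) atTop (𝓝 (v x)) := by
  have hcpt : IsCompact (Set.univ.pi fun _ : X => Set.Icc (-C) C) :=
    isCompact_univ_pi fun _ => isCompact_Icc
  obtain ⟨v, hv, φ, hφ, hlim⟩ := hcpt.tendsto_subseq (x := fun n => (fun x => u n x))
    (fun n x _ => abs_le.1 ((H1.abs_le (u n) x).trans (hC n)))
  have hlim' : Tendsto (id fun n => u (φ n) : ℕ → ∀ x, ℝ) atTop (𝓝 v) := hlim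
  have hmem : Memℓp v 2 := by
    refine lp.memℓp_of_tendsto (F := fun n => u (φ n)) ?_ hlim'
    rw [isBounded_iff_forall_norm_le]
    exact ⟨C, by rintro _ ⟨n, rfl⟩; exact hC _⟩
  refine ⟨⟨v, hmem⟩, φ, hφ, ?_, ?_⟩
  · exact lp.norm_le_of_tendsto (F := fun n => u (φ n)) (Eventually.of_forall fun n => hC _) hlim'
  · intro x
    exact (tendsto_pi_nhds.1 hlim) x

end L2

section Functional

variable {X : Type*} {f F : X → ℝ → ℝ}

theorem FH.exL (h : FH f F) (u : H1 X) : ∃ L : ℝ, 0 ≤ L ∧ ∀ x, |f x (u x)| ≤ L * |u x| ∧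
    F x (u x) ≤ L * u x ^ 2 := by
  obtain ⟨L, hL0, hL⟩ := h.lip ‖u‖ (norm_nonneg _)
  exact ⟨L, hL0, fun x => ⟨hL x _ (H1.abs_le u x), h.Fle hL0 x (hL x) _ (H1.abs_le u x)⟩⟩

/-- The Nemytskii operator. -/
noncomputable def Nem (h : FH f F) (u : H1 X) : H1 X :=
  ⟨fun x => f x (u x), by
    obtain ⟨L, hL0, hL⟩ := h.exL u
    refine Memℓp.mono' ((lp.memℓp u).const_smul L) fun x => ?_
    simp only [Pi.smul_apply, smul_eq_mul, norm_mul, Real.norm_eq_abs, abs_of_nonneg hL0]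
    exact (hL x).1⟩

theorem Nem_apply (h : FH f F) (u : H1 X) (x : X) : Nem h u x = f x (u x) := rfl

theorem FH.summableF (h : FH f F) (u : H1 X) : Summable fun x => F x (u x) := by
  obtain ⟨L, hL0, hL⟩ := h.exL u
  exact Summable.of_nonneg_of_le (fun x => h.Fnn _ _) (fun x => (hL x).2)
    ((H1.summable_sq u).mul_left L)

theorem Nem_trunc_le (h : FH f F) (u₀ : H1 X) : ∃ L : ℝ, 0 ≤ L ∧ ∀ u : H1 X, ‖u - u₀‖ ≤ 1 →
    ∀ S, ‖Nem h u - truncH S (Nem h u)‖ ≤ L * (‖u₀ - truncH S u₀‖ + ‖u - u₀‖) := by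
  obtain ⟨L, hL0, hL⟩ := h.lip (‖u₀‖ + 1) (by positivity)
  refine ⟨L, hL0, fun u hu S => ?_⟩
  have hn : ‖u‖ ≤ ‖u₀‖ + 1 := by
    have := norm_le_norm_add_norm_sub' u u₀
    linarith
  have h1 : ‖Nem h u - truncH S (Nem h u)‖ ≤ ‖L • (u - truncH S u)‖ := by
    refine H1.norm_mono fun x => ?_
    simp only [lp.coeFn_sub, lp.coeFn_smul, Pi.sub_apply, Pi.smul_apply, smul_eq_mul]
    by_cases hx : x ∈ S
    · simp [truncH_apply_mem _ hx]
    · rw [truncH_apply_notMem _ hx, truncH_apply_notMem _ hx, Nem_apply, sub_zero, sub_zero,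
        abs_mul, abs_of_nonneg hL0]
      exact hL x _ ((H1.abs_le u x).trans hn)
  rw [norm_smul, Real.norm_eq_abs, abs_of_nonneg hL0] at h1
  refine h1.trans ?_
  gcongr
  have e : u - truncH S u = (u₀ - truncH S u₀) + ((u - u₀) - truncH S (u - u₀)) := by
    rw [truncH_sub]; abel
  rw [e]
  exact (norm_add_le _ _).trans (add_le_add le_rfl (norm_sub_truncH_le _ _))

theorem Nem_trunc_unif (h : FH f F) (u₀ : H1 X) (ε : ℝ) (hε : 0 < ε) :
    ∃ S₀ : Finset X, ∃ δ > 0, ∀ S, S₀ ≤ S → ∀ u, ‖u - u₀‖ < δ →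
      ‖Nem h u - truncH S (Nem h u)‖ < ε := by
  obtain ⟨L, hL0, hL⟩ := Nem_trunc_le h u₀
  have h1 := (Metric.tendsto_nhds.1 (truncH_tendsto u₀)) (ε / (2 * (L + 1))) (by positivity)
  obtain ⟨S₀, hS⟩ := eventually_atTop.1 h1
  refine ⟨S₀, min 1 (ε / (2 * (L + 1))), by positivity, fun S hS0 u hu => ?_⟩
  have h2 := hS S hS0
  rw [dist_comm, dist_eq_norm] at h2
  have h3 := hu.trans_le (min_le_right _ _)
  calc _ ≤ L * (‖u₀ - truncH S u₀‖ + ‖u - u₀‖) := hL u (hu.trans_le (min_le_left _ _)).le S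
    _ ≤ L * (ε / (2 * (L + 1)) + ε / (2 * (L + 1))) := by gcongr
    _ = (L / (L + 1)) * ε := by field_simp; ring
    _ < 1 * ε := by
      gcongr
      rw [div_lt_one (by positivity)]; linarith
    _ = ε := one_mul _

theorem continuous_eval (x : X) : Continuous fun u : H1 X => u x :=
  (lp.lipschitzWith_one_eval 2 x).continuous

theorem continuous_truncNem (h : FH f F) (S : Finset X) :
    Continuous fun u : H1 X => truncH S (Nem h u) := by
  classical
  simp only [truncH]
  refine continuous_finsetSum _ fun x _ => ?_
  exact (lp.isometry_single x).continuous.comp ((h.cont x).comp (continuous_eval x))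

theorem continuous_Nem (h : FH f F) : Continuous (Nem h) := by
  rw [continuous_iff_continuousAt]
  intro u₀
  apply continuousAt_of_locally_uniform_approx_of_continuousAt
  intro U hU
  obtain ⟨ε, hε, hU⟩ := Metric.mem_uniformity_dist.1 hU
  obtain ⟨S₀, δ, hδ, hh⟩ := Nem_trunc_unif h u₀ ε hε
  refine ⟨Metric.ball u₀ δ, Metric.ball_mem_nhds _ hδ, fun u => truncH S₀ (Nem h u),
    (continuous_truncNem h S₀).continuousAt, fun u hu => hU ?_⟩
  rw [dist_eq_norm]
  exact hh S₀ le_rfl u (by simpa [dist_eq_norm] using hu)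

theorem hasFDerivAt_G (h : FH f F) (u₀ : H1 X) :
    HasFDerivAt (fun u : H1 X => ∑' x, F x (u x)) (innerSL ℝ (Nem h u₀)) u₀ := by
  refine hasFDerivAt_of_tendstoUniformlyOnFilter (l := (atTop : Filter (Finset X)))
    (f := fun S (u : H1 X) => ∑ x ∈ S, F x (u x))
    (f' := fun S u => innerSL ℝ (truncH S (Nem h u))) (g' := fun u => innerSL ℝ (Nem h u)) ?_ ?_ ?_
  · rw [Metric.tendstoUniformlyOnFilter_iff]
    intro ε hε
    obtain ⟨S₀, δ, hδ, hh⟩ := Nem_trunc_unif h u₀ ε hε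
    filter_upwards [(eventually_ge_atTop S₀).prod_mk (Metric.ball_mem_nhds u₀ hδ)] with p hp
    rw [dist_eq_norm, ← map_sub, innerSL_apply_norm]
    exact hh p.1 hp.1 p.2 (by simpa [dist_eq_norm] using hp.2)
  · refine Eventually.of_forall fun p => ?_
    have h1 : ∀ x ∈ p.1, HasFDerivAt (fun u : H1 X => F x (u x))
        ((f x (p.2 x)) • lp.evalCLM ℝ (fun _ : X => ℝ) 2 x) p.2 := by
      intro x _
      exact (h.deriv x (p.2 x)).comp_hasFDerivAt p.2
        (lp.evalCLM ℝ (fun _ : X => ℝ) 2 x).hasFDerivAt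
    refine (HasFDerivAt.fun_sum h1).congr_fderiv ?_
    ext v
    rw [innerSL_apply_apply, inner_truncH, sum_apply]
    rfl
  · refine Eventually.of_forall fun u => ?_
    exact (h.summableF u).hasSum

variable (A : H1 X →L[ℝ] H1 X)

/-- The abstract functional. -/
noncomputable def Ph (F : X → ℝ → ℝ) (u : H1 X) : ℝ := 1 / 2 * inner ℝ (A u) u - ∑' x, F x (u x)

/-- its gradient -/
noncomputable def gr (h : FH f F) (u : H1 X) : H1 X := A u - Nem h u

theorem continuous_gr (h : FH f F) : Continuous (gr A h) :=
  A.continuous.sub (continuous_Nem h)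

variable {A}

theorem hasFDerivAt_Ph (h : FH f F) (hA : ∀ u v, inner ℝ (A u) v = inner ℝ (A v) u) (u : H1 X) :
    HasFDerivAt (Ph A F) (innerSL ℝ (gr A h u)) u := by
  have h1 : HasFDerivAt (fun u : H1 X => inner ℝ (A u) u) _ u :=
    A.hasFDerivAt.inner ℝ (hasFDerivAt_id u)
  refine ((h1.const_mul (1 / 2)).sub (hasFDerivAt_G h u)).congr_fderiv ?_
  ext v
  have := hA u v
  simp [gr, fderivInnerCLM_apply, this]
  ring

/-- Nehari condition (abstract). -/
def Neh (A : H1 X →L[ℝ] H1 X) (h : FH f F) (u : H1 X) : Prop := u ≠ 0 ∧ inner ℝ (gr A h u) u = 0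

theorem hasDerivAt_line (h : FH f F) (hA : ∀ u v, inner ℝ (A u) v = inner ℝ (A v) u) (u v : H1 X)
    (t : ℝ) : HasDerivAt (fun t : ℝ => Ph A F (u + t • v)) (inner ℝ (gr A h (u + t • v)) v) t := by
  have h1 : HasDerivAt (fun t : ℝ => u + t • v) v t := by
    simpa using ((hasDerivAt_id t).smul_const v).const_add u
  exact (hasFDerivAt_Ph h hA (u + t • v)).comp_hasDerivAt t h1

theorem hasDerivAt_ray (h : FH f F) (hA : ∀ u v, inner ℝ (A u) v = inner ℝ (A v) u) (v : H1 X)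
    (t : ℝ) : HasDerivAt (fun t : ℝ => Ph A F (t • v)) (inner ℝ (gr A h (t • v)) v) t := by
  simpa using hasDerivAt_line h hA 0 v t

theorem gr_ray_lt (h : FH f F) (u : H1 X) (hu : u ≠ 0)
    {s t : ℝ} (hs : 0 < s) (hst : s < t) :
    inner ℝ (gr A h (t • u)) u / t < inner ℝ (gr A h (s • u)) u / s := by
  have ht := hs.trans hst
  have e : ∀ r : ℝ, 0 < r → inner ℝ (gr A h (r • u)) u / r =
      inner ℝ (A u) u - ∑' x, f x (r * u x) * u x / r := by
    intro r hr
    have e2 : inner ℝ (Nem h (r • u)) u / r = ∑' x, f x (r * u x) * u x / r := by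
      rw [H1.inner_def, tsum_div_const]; rfl
    rw [← e2, gr, inner_sub_left, map_smul, real_inner_smul_left]
    field_simp
  have hsum : ∀ r : ℝ, Summable fun x => f x (r * u x) * u x / r := fun r =>
    (H1.summable_mul (Nem h (r • u)) u).div_const r
  rw [e s hs, e t ht]
  obtain ⟨x, hx⟩ : ∃ x, u x ≠ 0 := by
    by_contra! hh
    exact hu (lp.ext (funext hh))
  refine sub_lt_sub_left (Summable.tsum_lt_tsum (i := x) (fun y => ?_) (h.mono x _ s t hx hs hst)
    (hsum s) (hsum t)) _
  by_cases hy : u y = 0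
  · simp [hy]
  · exact (h.mono y _ s t hy hs hst).le

end Functional

section Rays

variable {X : Type*} {f F : X → ℝ → ℝ} {A : H1 X →L[ℝ] H1 X}

theorem Ph_zero (h : FH f F) : Ph A F 0 = 0 := by
  simp [Ph, h.F0]

theorem Neh.pos (h : FH f F) {v : H1 X} (hv : Neh A h v) {s : ℝ} (hs : 0 < s) (hs1 : s < 1) :
    0 < inner ℝ (gr A h (s • v)) v := by
  have := gr_ray_lt (A := A) h v hv.1 hs hs1
  rw [one_smul, hv.2, zero_div] at this
  exact (div_pos_iff_of_pos_right hs).1 this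

theorem Neh.neg (h : FH f F) {v : H1 X} (hv : Neh A h v) {s : ℝ} (hs1 : 1 < s) :
    inner ℝ (gr A h (s • v)) v < 0 := by
  have := gr_ray_lt (A := A) h v hv.1 one_pos hs1
  rw [one_smul, hv.2, zero_div] at this
  have hs : 0 < s := one_pos.trans hs1
  by_contra! hh
  exact absurd (div_nonneg hh hs.le) (not_le.2 this)

theorem continuous_ray (h : FH f F) (hA : ∀ u v, inner ℝ (A u) v = inner ℝ (A v) u) (v : H1 X) :
    Continuous fun s : ℝ => Ph A F (s • v) :=
  continuous_iff_continuousAt.2 fun t => (hasDerivAt_ray h hA v t).continuousAt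

theorem Neh.strictMono (h : FH f F) (hA : ∀ u v, inner ℝ (A u) v = inner ℝ (A v) u)
    {v : H1 X} (hv : Neh A h v) : StrictMonoOn (fun s : ℝ => Ph A F (s • v)) (Set.Icc 0 1) := by
  refine strictMonoOn_of_deriv_pos (convex_Icc 0 1) (continuous_ray h hA v).continuousOn ?_
  intro s hs
  rw [interior_Icc] at hs
  rw [(hasDerivAt_ray h hA v s).deriv]
  exact hv.pos h hs.1 hs.2

theorem Neh.anti (h : FH f F) (hA : ∀ u v, inner ℝ (A u) v = inner ℝ (A v) u)
    {v : H1 X} (hv : Neh A h v) : StrictAntiOn (fun s : ℝ => Ph A F (s • v)) (Set.Ici 1) := by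
  refine strictAntiOn_of_deriv_neg (convex_Ici 1) (continuous_ray h hA v).continuousOn ?_
  intro s hs
  rw [interior_Ici] at hs
  rw [(hasDerivAt_ray h hA v s).deriv]
  exact hv.neg h hs

theorem Neh.max (h : FH f F) (hA : ∀ u v, inner ℝ (A u) v = inner ℝ (A v) u)
    {v : H1 X} (hv : Neh A h v) {s : ℝ} (hs : 0 ≤ s) : Ph A F (s • v) ≤ Ph A F v := by
  rcases le_total s 1 with h1 | h1
  · have := (hv.strictMono h hA).monotoneOn ⟨hs, h1⟩ ⟨zero_le_one, le_rfl⟩ h1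
    simpa using this
  · have := (hv.anti h hA).antitoneOn (Set.self_mem_Ici) h1 h1
    simpa using this

theorem Neh.ray_pos (h : FH f F) (hA : ∀ u v, inner ℝ (A u) v = inner ℝ (A v) u)
    {v : H1 X} (hv : Neh A h v) {s : ℝ} (hs : 0 < s) (hs1 : s ≤ 1) : 0 < Ph A F (s • v) := by
  have := (hv.strictMono h hA) ⟨le_rfl, zero_le_one⟩ ⟨hs.le, hs1⟩ hs
  simpa [Ph_zero h] using this

/-- small sup norm -/
theorem small_sup (h : FH f F) {c : ℝ} (hc : 0 < c) (hcoer : ∀ u, c * ‖u‖ ^ 2 ≤ inner ℝ (A u) u) :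
    ∃ δ > 0, ∀ v : H1 X, (∀ x, |v x| < δ) →
      c / 4 * ‖v‖ ^ 2 ≤ Ph A F v ∧ c / 2 * ‖v‖ ^ 2 ≤ inner ℝ (gr A h v) v := by
  obtain ⟨δ, hδ, hs⟩ := h.small (c / 4) (by positivity)
  refine ⟨δ, hδ, fun v hv => ?_⟩
  have h1 : ∑' x, F x (v x) ≤ c / 4 * ‖v‖ ^ 2 := by
    rw [H1.norm_sq, ← tsum_mul_left]
    refine (h.summableF v).tsum_le_tsum (fun x => ?_) ((H1.summable_sq v).mul_left _)
    refine h.Fle (M := |v x|) (by positivity) x (fun s hs' => ?_) _ le_rfl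
    exact hs x s (hs'.trans_lt (hv x))
  have h2 : inner ℝ (Nem h v) v ≤ c / 4 * ‖v‖ ^ 2 := by
    rw [H1.norm_sq, ← tsum_mul_left, H1.inner_def]
    refine (H1.summable_mul _ _).tsum_le_tsum (fun x => ?_) ((H1.summable_sq v).mul_left _)
    rw [Nem_apply]
    calc f x (v x) * v x ≤ |f x (v x) * v x| := le_abs_self _
      _ = |f x (v x)| * |v x| := abs_mul _ _
      _ ≤ (c / 4 * |v x|) * |v x| := by gcongr; exact hs x _ (hv x)
      _ = c / 4 * v x ^ 2 := by rw [← sq_abs]; ring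
  have h3 := hcoer v
  have h4 : 0 ≤ c * ‖v‖ ^ 2 := by positivity
  constructor
  · rw [Ph]; linarith
  · rw [gr, inner_sub_left]; linarith

theorem Ph_le (h : FH f F) (u : H1 X) (x : X) : Ph A F u ≤ ‖A‖ / 2 * ‖u‖ ^ 2 - F x (u x) := by
  have h1 : F x (u x) ≤ ∑' x, F x (u x) := (h.summableF u).le_tsum x (fun y _ => h.Fnn _ _)
  have h2 : inner ℝ (A u) u ≤ ‖A‖ * ‖u‖ ^ 2 := by
    refine (real_inner_le_norm _ _).trans ?_
    rw [sq, ← mul_assoc]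
    gcongr
    exact A.le_opNorm u
  rw [Ph]; linarith

theorem exists_neh (h : FH f F) (hA : ∀ u v, inner ℝ (A u) v = inner ℝ (A v) u)
    {c : ℝ} (hc : 0 < c) (hcoer : ∀ u, c * ‖u‖ ^ 2 ≤ inner ℝ (A u) u)
    (u : H1 X) (hu : u ≠ 0) : ∃ t : ℝ, 0 < t ∧ Neh A h (t • u) := by
  obtain ⟨x, hx⟩ : ∃ x, u x ≠ 0 := by
    by_contra! hh
    exact hu (lp.ext (funext hh))
  have hun : 0 < ‖u‖ := norm_pos_iff.2 hu
  have hxa : 0 < |u x| := abs_pos.2 hx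
  -- positive somewhere
  obtain ⟨δ, hδ, hsm⟩ := small_sup h hc hcoer
  have hpos : ∃ s : ℝ, 0 < s ∧ 0 ≤ inner ℝ (gr A h (s • u)) u := by
    refine ⟨δ / (2 * ‖u‖), by positivity, ?_⟩
    set s := δ / (2 * ‖u‖) with hs
    have hs0 : 0 < s := by positivity
    have := (hsm (s • u) fun y => ?_).2
    · rw [real_inner_smul_right] at this
      have h0 : 0 ≤ s * inner ℝ (gr A h (s • u)) u := le_trans (by positivity) this
      exact nonneg_of_mul_nonneg_right h0 hs0
    · refine (H1.abs_le _ y).trans_lt ?_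
      rw [norm_smul, Real.norm_eq_abs, abs_of_pos hs0, hs]
      have : δ / (2 * ‖u‖) * ‖u‖ = δ / 2 := by field_simp
      rw [this]; linarith
  have hneg : ∃ s : ℝ, 0 < s ∧ inner ℝ (gr A h (s • u)) u ≤ 0 := by
    obtain ⟨R, hR, hsup⟩ := h.super ((‖A‖ / 2 * ‖u‖ ^ 2 + 1) / u x ^ 2)
    set s := R / |u x| with hs
    have hs0 : 0 < s := by positivity
    have h1 : Ph A F (s • u) < 0 := by
      refine (Ph_le h _ x).trans_lt ?_
      have h2 := hsup x ((s • u) x) (by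
        rw [lp.coeFn_smul, Pi.smul_apply, smul_eq_mul, abs_mul, abs_of_pos hs0, hs]
        rw [div_mul_cancel₀ _ hxa.ne'])
      have h3 : (‖A‖ / 2 * ‖u‖ ^ 2 + 1) / u x ^ 2 * ((s • u) x) ^ 2
          = (‖A‖ / 2 * ‖u‖ ^ 2 + 1) * s ^ 2 := by
        rw [lp.coeFn_smul, Pi.smul_apply, smul_eq_mul]; field_simp
      rw [h3] at h2
      rw [norm_smul, mul_pow, Real.norm_eq_abs, sq_abs]
      nlinarith [pow_pos hs0 2]
    obtain ⟨r, hr, hr2⟩ := exists_hasDerivAt_eq_slope (fun s : ℝ => Ph A F (s • u)) _ hs0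
      (continuous_ray h hA u).continuousOn (fun r _ => hasDerivAt_ray h hA u r)
    refine ⟨r, hr.1, ?_⟩
    rw [hr2]
    simp only [zero_smul, Ph_zero h, sub_zero]
    exact div_nonpos_of_nonpos_of_nonneg h1.le hs0.le
  obtain ⟨s₁, hs₁, h₁⟩ := hpos
  obtain ⟨s₂, hs₂, h₂⟩ := hneg
  have hcont : Continuous fun s : ℝ => inner ℝ (gr A h (s • u)) u :=
    ((continuous_gr A h).comp (continuous_id.smul continuous_const)).inner continuous_const
  obtain ⟨t, ht, ht0⟩ := isPreconnected_Ioi.intermediate_value (s := Set.Ioi (0:ℝ)) hs₂ hs₁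
    hcont.continuousOn ⟨h₂, h₁⟩
  refine ⟨t, ht, smul_ne_zero (ne_of_gt ht) hu, ?_⟩
  have ht0 : inner ℝ (gr A h (t • u)) u = 0 := ht0
  rw [real_inner_smul_right, ht0, mul_zero]

theorem neh_bounded (h : FH f F) (hA : ∀ u v, inner ℝ (A u) v = inner ℝ (A v) u)
    {c : ℝ} (hc : 0 < c) (hcoer : ∀ u, c * ‖u‖ ^ 2 ≤ inner ℝ (A u) u) (K : ℝ) :
    ∃ C : ℝ, 0 < C ∧ ∀ u, Neh A h u → Ph A F u ≤ K → ‖u‖ ≤ C := by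
  obtain ⟨δ, hδ, hsm⟩ := small_sup h hc hcoer
  set s : ℝ := Real.sqrt (4 * (|K| + 1) / c) with hs
  have hs0 : 0 < s := Real.sqrt_pos.2 (by positivity)
  have hs2 : c / 4 * s ^ 2 = |K| + 1 := by
    rw [hs, Real.sq_sqrt (by positivity)]; field_simp
  obtain ⟨R, hR, hsup⟩ := h.super ((‖A‖ / 2 + 1) / (δ / s) ^ 2)
  refine ⟨R / (δ / s), by positivity, fun u hu hK => ?_⟩
  by_contra! hlt
  have hun : 0 < ‖u‖ := norm_pos_iff.2 hu.1
  have hcoef : 0 < s / ‖u‖ := by positivity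
  have hx : ∃ x, δ ≤ |((s / ‖u‖) • u) x| := by
    by_contra! hh
    have h1 := (hsm _ hh).1
    have h2 := hu.max h hA hcoef.le
    have h3 : ‖(s / ‖u‖) • u‖ = s := by
      rw [norm_smul, Real.norm_eq_abs, abs_of_pos hcoef]; field_simp
    rw [h3, hs2] at h1
    linarith [le_abs_self K]
  obtain ⟨x, hx⟩ := hx
  rw [lp.coeFn_smul, Pi.smul_apply, smul_eq_mul, abs_mul, abs_of_pos hcoef] at hx
  have hx2 : (δ / s) * ‖u‖ ≤ |u x| := by
    rw [div_mul_eq_mul_div, div_le_iff₀ hs0]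
    rw [div_mul_eq_mul_div, le_div_iff₀ hun] at hx
    linarith
  have hRx : R ≤ |u x| := by
    rw [div_lt_iff₀ (by positivity)] at hlt
    linarith
  have h1 := hsup x _ hRx
  have h2 := Ph_le (A := A) h u x
  have h3 : 0 < Ph A F u := by simpa using hu.ray_pos h hA one_pos le_rfl
  have h4 : (‖A‖ / 2 + 1) * ‖u‖ ^ 2 ≤ (‖A‖ / 2 + 1) / (δ / s) ^ 2 * u x ^ 2 := by
    have : ((δ / s) * ‖u‖) ^ 2 ≤ u x ^ 2 := by
      rw [← sq_abs (u x)]; gcongr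
    calc _ = (‖A‖ / 2 + 1) / (δ / s) ^ 2 * ((δ / s) * ‖u‖) ^ 2 := by field_simp
      _ ≤ _ := by gcongr
  nlinarith [pow_pos hun 2]

set_option maxHeartbeats 1000000 in
/-- a minimizer on the Nehari set is a critical point -/
theorem neh_min_crit (h : FH f F) (hA : ∀ u v, inner ℝ (A u) v = inner ℝ (A v) u)
    (u : H1 X) (hu : Neh A h u) (hmin : ∀ w, Neh A h w → Ph A F u ≤ Ph A F w) : gr A h u = 0 := by
  by_contra hg
  set v : H1 X := - gr A h u with hv
  have hcW : Continuous fun p : ℝ × ℝ => p.1 • u + p.2 • v := by fun_prop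
  have hcG : Continuous fun p : ℝ × ℝ => gr A h (p.1 • u + p.2 • v) := (continuous_gr A h).comp hcW
  have hc1 : Continuous fun p : ℝ × ℝ => inner ℝ (gr A h (p.1 • u + p.2 • v)) v :=
    hcG.inner continuous_const
  have hc2 : Continuous fun p : ℝ × ℝ => inner ℝ (p.1 • u + p.2 • v) u :=
    hcW.inner continuous_const
  have e1 : ∀ᶠ p : ℝ × ℝ in 𝓝 (1, 0), inner ℝ (gr A h (p.1 • u + p.2 • v)) v < 0 := by
    refine hc1.continuousAt.eventually_lt_const ?_
    simp only [one_smul, zero_smul, add_zero]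
    rw [hv, inner_neg_right, real_inner_self_eq_norm_sq]
    have : 0 < ‖gr A h u‖ := norm_pos_iff.2 hg
    nlinarith
  have e2 : ∀ᶠ p : ℝ × ℝ in 𝓝 (1, 0), 0 < inner ℝ (p.1 • u + p.2 • v) u := by
    refine hc2.continuousAt.eventually_const_lt ?_
    simp only [one_smul, zero_smul, add_zero]
    rw [real_inner_self_eq_norm_sq]
    have : 0 < ‖u‖ := norm_pos_iff.2 hu.1
    positivity
  obtain ⟨δ, hδ, hball⟩ := Metric.eventually_nhds_iff.1 (e1.and e2)
  set r := min (δ / 2) (1 / 2) with hr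
  have hr0 : 0 < r := by positivity
  have hrδ : r < δ := (min_le_left _ _).trans_lt (by linarith)
  have hr1 : r < 1 := (min_le_right _ _).trans_lt (by norm_num)
  have hbox : ∀ s e : ℝ, |s - 1| ≤ r → |e| ≤ r →
      inner ℝ (gr A h (s • u + e • v)) v < 0 ∧ 0 < inner ℝ (s • u + e • v) u := by
    intro s e hs he
    refine hball (y := (s, e)) ?_
    rw [Prod.dist_eq]
    simp only [Real.dist_eq, sub_zero]
    exact max_lt (hs.trans_lt hrδ) (he.trans_lt hrδ)
  have e3 : ∀ᶠ e : ℝ in 𝓝 0,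
      0 < inner ℝ (gr A h ((1 - r) • u + e • v)) ((1 - r) • u + e • v) := by
    have hc : Continuous fun e : ℝ =>
      inner ℝ (gr A h ((1 - r) • u + e • v)) ((1 - r) • u + e • v) := by
      have hW : Continuous fun e : ℝ => (1 - r) • u + e • v := by fun_prop
      exact ((continuous_gr A h).comp hW).inner hW
    refine hc.continuousAt.eventually_const_lt ?_
    simp only [zero_smul, add_zero]
    rw [real_inner_smul_right]
    exact mul_pos (by linarith) (hu.pos h (by linarith) (by linarith))
  have e4 : ∀ᶠ e : ℝ in 𝓝 0,
      inner ℝ (gr A h ((1 + r) • u + e • v)) ((1 + r) • u + e • v) < 0 := by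
    have hc : Continuous fun e : ℝ =>
      inner ℝ (gr A h ((1 + r) • u + e • v)) ((1 + r) • u + e • v) := by
      have hW : Continuous fun e : ℝ => (1 + r) • u + e • v := by fun_prop
      exact ((continuous_gr A h).comp hW).inner hW
    refine hc.continuousAt.eventually_lt_const ?_
    simp only [zero_smul, add_zero]
    rw [real_inner_smul_right]
    exact mul_neg_of_pos_of_neg (by linarith) (hu.neg h (by linarith))
  obtain ⟨δ', hδ', hb'⟩ := Metric.eventually_nhds_iff.1 (e3.and e4)
  set e := min r (δ' / 2) with he
  have he0 : 0 < e := by positivity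
  have her : e ≤ r := min_le_left _ _
  have hee := hb' (y := e) (by
    rw [Real.dist_eq, sub_zero, abs_of_pos he0]
    exact (min_le_right _ _).trans_lt (by linarith))
  have hc : Continuous fun s : ℝ => inner ℝ (gr A h (s • u + e • v)) (s • u + e • v) := by
    have hW : Continuous fun s : ℝ => s • u + e • v := by fun_prop
    exact ((continuous_gr A h).comp hW).inner hW
  obtain ⟨s, hs, hs0⟩ := intermediate_value_Icc' (show 1 - r ≤ 1 + r by linarith)
    hc.continuousOn ⟨hee.2.le, hee.1.le⟩
  have hs1 : |s - 1| ≤ r := abs_le.2 ⟨by linarith [hs.1], by linarith [hs.2]⟩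
  have hw : Neh A h (s • u + e • v) := by
    refine ⟨fun h0 => ?_, hs0⟩
    have := (hbox s e hs1 (by rwa [abs_of_pos he0])).2
    rw [h0, inner_zero_left] at this
    exact lt_irrefl _ this
  have hanti : StrictAntiOn (fun t : ℝ => Ph A F (s • u + t • v)) (Set.Icc 0 e) := by
    refine strictAntiOn_of_deriv_neg (convex_Icc 0 e) ?_ ?_
    · exact (continuous_iff_continuousAt.2 fun t =>
        (hasDerivAt_line h hA (s • u) v t).continuousAt).continuousOn
    · intro t ht
      rw [interior_Icc] at ht
      rw [(hasDerivAt_line h hA (s • u) v t).deriv]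
      exact (hbox s t hs1 (by rw [abs_of_pos ht.1]; linarith [ht.2])).1
  have h1 := hanti ⟨le_rfl, he0.le⟩ ⟨he0.le, le_rfl⟩ he0
  simp only [zero_smul, add_zero] at h1
  have h2 := hu.max h hA (s := s) (by linarith [hs.1])
  linarith [hmin _ hw]

end Rays

section Existence

variable {X : Type*} {f F : X → ℝ → ℝ} {A : H1 X →L[ℝ] H1 X}

theorem Ph_split (h : FH f F) (hA : ∀ u v, inner ℝ (A u) v = inner ℝ (A v) u)
    {M L : ℝ} (hL0 : 0 ≤ L) (hL : ∀ x s, |s| ≤ M → |f x s| ≤ L * |s|)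
    (u w : H1 X) (t : ℝ) (ht : 0 ≤ t) (hM : t * (‖u‖ + ‖w‖) ≤ M) :
    |Ph A F (t • (u + w)) - Ph A F (t • u) - Ph A F (t • w)| ≤
      t ^ 2 * (|inner ℝ (A u) w| + 3 * L * inner ℝ (absH u) (absH w)) := by
  have h1 : inner ℝ (A (t • (u + w))) (t • (u + w)) = inner ℝ (A (t • u)) (t • u) +
      inner ℝ (A (t • w)) (t • w) + 2 * (t ^ 2 * inner ℝ (A u) w) := by
    simp only [map_smul, map_add, real_inner_smul_left, real_inner_smul_right, inner_add_left,
      inner_add_right]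
    rw [hA w u]; ring
  have h2 : |∑' x, (F x ((t • (u + w)) x) - F x ((t • u) x) - F x ((t • w) x))| ≤
      t ^ 2 * (3 * L * inner ℝ (absH u) (absH w)) := by
    rw [← Real.norm_eq_abs]
    refine tsum_of_norm_bounded
      (((H1.hasSum_mul (absH u) (absH w)).mul_left (3 * L)).mul_left (t ^ 2)) fun x => ?_
    simp only [lp.coeFn_smul, lp.coeFn_add, Pi.smul_apply, Pi.add_apply, smul_eq_mul, mul_add,
      Real.norm_eq_abs, absH_apply]
    have := h.split hL0 x (hL x) (t * u x) (t * w x) (by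
      rw [abs_mul, abs_mul, abs_of_nonneg ht, ← mul_add]
      refine le_trans ?_ hM
      gcongr <;> exact H1.abs_le _ _)
    refine this.trans (le_of_eq ?_)
    rw [abs_mul, abs_mul, abs_of_nonneg ht]; ring
  rw [Summable.tsum_sub ((h.summableF _).sub (h.summableF _)) (h.summableF _),
    Summable.tsum_sub (h.summableF _) (h.summableF _)] at h2
  have e : Ph A F (t • (u + w)) - Ph A F (t • u) - Ph A F (t • w) = t ^ 2 * inner ℝ (A u) w -
      (∑' x, F x ((t • (u + w)) x) - ∑' x, F x ((t • u) x) - ∑' x, F x ((t • w) x)) := by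
    simp only [Ph]; rw [h1]; ring
  rw [e]
  refine (abs_sub _ _).trans ?_
  rw [abs_mul, abs_of_nonneg (sq_nonneg t), mul_add]
  exact add_le_add le_rfl h2

set_option maxHeartbeats 1000000 in
theorem exists_ground [Countable X] [Nonempty X] (h : FH f F)
    (hA : ∀ u v, inner ℝ (A u) v = inner ℝ (A v) u)
    {c : ℝ} (hc : 0 < c) (hcoer : ∀ u, c * ‖u‖ ^ 2 ≤ inner ℝ (A u) u)
    (K : Finset X)
    (htr : ∀ u, Neh A h u → ∀ x, ∃ u', Neh A h u' ∧ Ph A F u' = Ph A F u ∧ ∃ y ∈ K, u' y = u x) :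
    ∃ u, Neh A h u ∧ gr A h u = 0 ∧ ∀ w, Neh A h w → Ph A F u ≤ Ph A F w := by
  classical
  -- the infimum
  set S : Set ℝ := Ph A F '' {u | Neh A h u} with hS
  have hne : S.Nonempty := by
    obtain ⟨x⟩ := ‹Nonempty X›
    have h0 : (lp.single 2 x (1:ℝ) : H1 X) ≠ 0 := by
      intro h0
      have := congrArg (fun u : H1 X => u x) h0
      simp at this
    obtain ⟨t, _, ht⟩ := exists_neh h hA hc hcoer _ h0
    exact ⟨_, _, ht, rfl⟩
  have hpos : ∀ u, Neh A h u → 0 < Ph A F u := fun u hu => by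
    simpa using hu.ray_pos h hA one_pos le_rfl
  have hbdd : BddBelow S := ⟨0, by rintro _ ⟨u, hu, rfl⟩; exact (hpos u hu).le⟩
  set m := sInf S with hm
  have hmle : ∀ w, Neh A h w → m ≤ Ph A F w := fun w hw => csInf_le hbdd ⟨w, hw, rfl⟩
  suffices hsuff : ∃ u, Neh A h u ∧ Ph A F u ≤ m by
    obtain ⟨u, hu, hum⟩ := hsuff
    have hmin : ∀ w, Neh A h w → Ph A F u ≤ Ph A F w := fun w hw => hum.trans (hmle w hw)
    exact ⟨u, hu, neh_min_crit h hA u hu hmin, hmin⟩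
  obtain ⟨δ, hδ, hsm⟩ := small_sup h hc hcoer
  have hlarge : ∀ u, Neh A h u → ∃ x, δ ≤ |u x| := by
    intro u hu
    by_contra! hh
    have := (hsm u hh).2
    rw [hu.2] at this
    have hun : 0 < ‖u‖ := norm_pos_iff.2 hu.1
    have : 0 < c / 2 * ‖u‖ ^ 2 := by positivity
    linarith
  -- minimizing sequence
  have hseq : ∀ n : ℕ, ∃ u, Neh A h u ∧ Ph A F u < m + 1 / ((n:ℝ) + 1) ∧ ∃ y ∈ K, δ ≤ |u y| := by
    intro n
    obtain ⟨_, ⟨u, hu, rfl⟩, hlt⟩ := exists_lt_of_csInf_lt hne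
      (show sInf S < m + 1 / ((n:ℝ) + 1) by rw [← hm]; linarith [show 0 < 1 / ((n:ℝ) + 1) by positivity])
    obtain ⟨x, hx⟩ := hlarge u hu
    obtain ⟨u', hu', hP, y, hy, hyx⟩ := htr u hu x
    exact ⟨u', hu', by rw [hP]; exact hlt, y, hy, by rw [hyx]; exact hx⟩
  choose us hus hPus hys using hseq
  obtain ⟨C, hC, hCb⟩ := neh_bounded h hA hc hcoer (m + 1)
  have husC : ∀ n, ‖us n‖ ≤ C := fun n => hCb _ (hus n) ((hPus n).le.trans (by
    gcongr
    rw [div_le_one (by positivity)]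
    linarith [show (0:ℝ) ≤ n by positivity]))
  obtain ⟨u, φ, hφ, huC, hlim⟩ := exists_subseq us C husC
  -- the limit is nonzero
  have hu0 : u ≠ 0 := by
    rintro rfl
    have h1 : Tendsto (fun n => ∑ y ∈ K, |us (φ n) y|) atTop (𝓝 0) := by
      have := tendsto_finsetSum K fun y (_ : y ∈ K) => (hlim y).abs
      simpa using this
    have h2 : δ ≤ 0 := by
      refine ge_of_tendsto h1 (Eventually.of_forall fun n => ?_)
      obtain ⟨y, hy, hyd⟩ := hys (φ n)
      exact hyd.trans (Finset.single_le_sum (f := fun y => |us (φ n) y|)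
        (fun y _ => abs_nonneg _) hy)
    linarith
  obtain ⟨t₀, ht₀, htu⟩ := exists_neh h hA hc hcoer u hu0
  refine ⟨t₀ • u, htu, ?_⟩
  by_contra! hgt
  set w : ℕ → H1 X := fun n => us (φ n) - u with hw
  have hwC : ∀ n, ‖w n‖ ≤ 2 * C := fun n => (norm_sub_le _ _).trans (by linarith [husC (φ n)])
  have hw0 : ∀ x, Tendsto (fun n => w n x) atTop (𝓝 0) := by
    intro x
    have := (hlim x).sub_const (u x)
    simpa [hw] using this
  obtain ⟨L, hL0, hL⟩ := h.lip (t₀ * (3 * C)) (by positivity)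
  set E : ℕ → ℝ := fun n =>
    t₀ ^ 2 * (|inner ℝ (A u) (w n)| + 3 * L * inner ℝ (absH u) (absH (w n))) with hE
  have hE0 : Tendsto E atTop (𝓝 0) := by
    have h1 := (weak_tendsto (A u) w _ hwC hw0).abs
    have h2 := weak_tendsto (absH u) (fun n => absH (w n)) _
      (fun n => (norm_absH _).trans (hwC n)) (fun x => by simpa [absH_apply] using (hw0 x).abs)
    have := (h1.add (h2.const_mul (3 * L))).const_mul (t₀ ^ 2)
    simpa [hE] using this
  have hsplit : ∀ n (t : ℝ), 0 ≤ t → t ≤ t₀ →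
      Ph A F (t • u) + Ph A F (t • w n) - E n ≤ Ph A F (us (φ n)) := by
    intro n t ht htt
    have h1 := Ph_split h hA hL0 hL u (w n) t ht (by
      have : ‖u‖ + ‖w n‖ ≤ 3 * C := by linarith [hwC n]
      gcongr)
    have e : u + w n = us (φ n) := by simp [hw]
    rw [e] at h1
    have hin : 0 ≤ inner ℝ (absH u) (absH (w n)) := by
      rw [H1.inner_def]
      exact tsum_nonneg fun x => mul_nonneg (abs_nonneg _) (abs_nonneg _)
    have h2 : t ^ 2 * (|inner ℝ (A u) (w n)| + 3 * L * inner ℝ (absH u) (absH (w n))) ≤ E n := by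
      simp only [hE]
      gcongr
    have h3 := (abs_le.1 (h1.trans h2)).1
    have h4 := (hus (φ n)).max h hA ht
    linarith
  set τ := min t₀ (δ / (2 * C)) with hτ
  have hτ0 : 0 < τ := by positivity
  -- rays through u
  have hray : ∀ s t : ℝ, 0 ≤ s → s ≤ t → t ≤ t₀ → Ph A F (s • u) ≤ Ph A F (t • u) := by
    intro s t hs hst ht
    have := (htu.strictMono h hA).monotoneOn (a := s / t₀) (b := t / t₀)
      ⟨by positivity, by rw [div_le_one ht₀]; linarith⟩
      ⟨div_nonneg (hs.trans hst) ht₀.le, by rw [div_le_one ht₀]; linarith⟩ (by gcongr)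
    simp only [smul_smul] at this
    rwa [div_mul_cancel₀ _ ht₀.ne', div_mul_cancel₀ _ ht₀.ne'] at this
  have hη : 0 < Ph A F (τ • u) := by
    have := htu.ray_pos h hA (s := τ / t₀) (by positivity)
      (by rw [div_le_one ht₀]; exact min_le_left _ _)
    rwa [smul_smul, div_mul_cancel₀ _ ht₀.ne'] at this
  have hlow : ∀ n, min (Ph A F (t₀ • u)) (m + Ph A F (τ • u)) - E n ≤ Ph A F (us (φ n)) := by
    intro n
    by_cases hwn : w n = 0
    · have := hsplit n t₀ ht₀.le le_rfl
      rw [hwn, smul_zero, Ph_zero h] at this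
      linarith [min_le_left (Ph A F (t₀ • u)) (m + Ph A F (τ • u))]
    obtain ⟨t, ht, htw⟩ := exists_neh h hA hc hcoer _ hwn
    rcases le_or_gt t₀ t with hle | hlt
    · have h1 := hsplit n t₀ ht₀.le le_rfl
      have h2 := htw.ray_pos h hA (s := t₀ / t) (by positivity) (by rwa [div_le_one ht])
      rw [smul_smul, div_mul_cancel₀ _ ht.ne'] at h2
      linarith [min_le_left (Ph A F (t₀ • u)) (m + Ph A F (τ • u))]
    · have h1 := hsplit n t ht.le hlt.le
      have h2 := hmle _ htw
      have h3 : τ ≤ t := by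
        refine (min_le_right _ _).trans ?_
        rw [div_le_iff₀ (by positivity)]
        obtain ⟨x, hx⟩ := hlarge _ htw
        refine hx.trans ((H1.abs_le _ x).trans ?_)
        rw [norm_smul, Real.norm_eq_abs, abs_of_pos ht]
        gcongr
        exact hwC n
      have h4 := hray τ t hτ0.le h3 hlt.le
      linarith [min_le_right (Ph A F (t₀ • u)) (m + Ph A F (τ • u))]
  have hfin : min (Ph A F (t₀ • u)) (m + Ph A F (τ • u)) - 0 ≤ m + 0 := by
    refine le_of_tendsto_of_tendsto' (tendsto_const_nhds.sub hE0)
      (tendsto_const_nhds.add (tendsto_one_div_add_atTop_nhds_zero_nat.comp hφ.tendsto_atTop))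
      fun n => (hlow n).trans (hPus (φ n)).le
  have : m < min (Ph A F (t₀ • u)) (m + Ph A F (τ • u)) := lt_min hgt (by linarith)
  linarith

end Existence

section Concrete

/-- the unit steps of the lattice -/
abbrev StepZ (N : ℕ) := {d : Fin N → ℤ // (∑ i, (d i).natAbs) = 1}

instance stepFinite (N : ℕ) : Finite (StepZ N) := by
  refine Set.Finite.subset (Set.finite_Icc (fun _ => (-1 : ℤ)) (fun _ => (1 : ℤ))) ?_
  intro d hd
  have hd' : (∑ i, (d i).natAbs) = 1 := hd
  have h1 : ∀ i, (d i).natAbs ≤ 1 := fun i => by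
    rw [← hd']
    exact Finset.single_le_sum (f := fun i => (d i).natAbs) (fun _ _ => Nat.zero_le _)
      (Finset.mem_univ i)
  refine ⟨fun i => ?_, fun i => ?_⟩
  · have := h1 i; show (-1 : ℤ) ≤ d i; omega
  · have := h1 i; show d i ≤ 1; omega

noncomputable instance stepFintype (N : ℕ) : Fintype (StepZ N) := Fintype.ofFinite _

/-- neighbours as translates by unit steps -/
def nbrEquiv (N : ℕ) (x : Fin N → ℤ) : StepZ N ≃ {y : Fin N → ℤ // adjZ N x y} where
  toFun d := ⟨x + d.1, by
    have := d.2
    unfold adjZ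
    refine Eq.trans (Finset.sum_congr rfl fun i _ => ?_) this
    simp⟩
  invFun y := ⟨y.1 - x, by
    have h : (∑ i, (x i - y.1 i).natAbs) = 1 := y.2
    rw [← h]
    refine Finset.sum_congr rfl fun i _ => ?_
    simp only [Pi.sub_apply]
    omega⟩
  left_inv d := by ext i; simp
  right_inv y := by ext i; simp

theorem gradSq_eq (N : ℕ) (u : (Fin N → ℤ) → ℝ) (x : Fin N → ℤ) :
    gradSq (adjZ N) u x = 1 / 2 * ∑ d : StepZ N, (u (x + d.1) - u x) ^ 2 := by
  unfold gradSq gammaProd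
  rw [← (nbrEquiv N x).tsum_eq, tsum_fintype]
  congr 1
  refine Finset.sum_congr rfl fun d _ => ?_
  simp only [nbrEquiv, Equiv.coe_fn_mk]
  ring

/-- difference operator -/
noncomputable def diffL {N : ℕ} (d : Fin N → ℤ) : H1 (Fin N → ℤ) →L[ℝ] H1 (Fin N → ℤ) :=
  compL (Equiv.addRight d) - ContinuousLinearMap.id ℝ _

theorem diffL_apply {N : ℕ} (d : Fin N → ℤ) (u : H1 (Fin N → ℤ)) (x : Fin N → ℤ) :
    diffL d u x = u (x + d) - u x := rfl

/-- the Schroedinger operator -/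
noncomputable def opA (N : ℕ) (m : (Fin N → ℤ) → ℝ) (C : ℝ) (hC : 0 ≤ C) (hm : ∀ x, |m x| ≤ C) :
    H1 (Fin N → ℤ) →L[ℝ] H1 (Fin N → ℤ) :=
  (1 / 2 : ℝ) • (∑ d : StepZ N, (ContinuousLinearMap.adjoint (diffL d.1)).comp (diffL d.1))
    + mulL m C hC hm

theorem inner_opA (N : ℕ) (m : (Fin N → ℤ) → ℝ) (C : ℝ) (hC : 0 ≤ C) (hm : ∀ x, |m x| ≤ C)
    (u v : H1 (Fin N → ℤ)) :
    inner ℝ (opA N m C hC hm u) v =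
      1 / 2 * ∑ d : StepZ N, inner ℝ (diffL d.1 u) (diffL d.1 v)
        + inner ℝ (mulL m C hC hm u) v := by
  unfold opA
  simp only [ContinuousLinearMap.add_apply, ContinuousLinearMap.smul_apply,
    ContinuousLinearMap.sum_apply, ContinuousLinearMap.comp_apply, inner_add_left,
    real_inner_smul_left, sum_inner, ContinuousLinearMap.adjoint_inner_left]

theorem opA_symm (N : ℕ) (m : (Fin N → ℤ) → ℝ) (C : ℝ) (hC : 0 ≤ C) (hm : ∀ x, |m x| ≤ C)
    (u v : H1 (Fin N → ℤ)) :
    inner ℝ (opA N m C hC hm u) v = inner ℝ (opA N m C hC hm v) u := by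
  rw [inner_opA, inner_opA]
  congr 1
  · congr 1
    exact Finset.sum_congr rfl fun d _ => real_inner_comm _ _
  · rw [H1.inner_def, H1.inner_def]
    refine tsum_congr fun x => ?_
    rw [mulL_apply, mulL_apply]
    ring

theorem opA_self (N : ℕ) (m : (Fin N → ℤ) → ℝ) (C : ℝ) (hC : 0 ≤ C) (hm : ∀ x, |m x| ≤ C)
    (u : H1 (Fin N → ℤ)) :
    inner ℝ (opA N m C hC hm u) u =
      ∑' x, (gradSq (adjZ N) (fun y => u y) x + m x * (u x) ^ 2) := by
  rw [inner_opA]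
  have h1 : HasSum (fun x => 1 / 2 * ∑ d : StepZ N, diffL d.1 u x * diffL d.1 u x)
      (1 / 2 * ∑ d : StepZ N, inner ℝ (diffL d.1 u) (diffL d.1 u)) :=
    (hasSum_sum fun d _ => H1.hasSum_mul (diffL d.1 u) (diffL d.1 u)).mul_left _
  have h2 := h1.add (H1.hasSum_mul (mulL m C hC hm u) u)
  rw [← h2.tsum_eq]
  refine tsum_congr fun x => ?_
  rw [gradSq_eq, mulL_apply]
  congr 1
  · congr 1
    refine Finset.sum_congr rfl fun d _ => ?_
    rw [diffL_apply]
    ring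
  · ring

theorem opA_coer (N : ℕ) (m : (Fin N → ℤ) → ℝ) (C : ℝ) (hC : 0 ≤ C) (hm : ∀ x, |m x| ≤ C)
    (c : ℝ) (hc : ∀ x, c ≤ m x) (u : H1 (Fin N → ℤ)) :
    c * ‖u‖ ^ 2 ≤ inner ℝ (opA N m C hC hm u) u := by
  rw [inner_opA]
  have h1 : 0 ≤ 1 / 2 * ∑ d : StepZ N, inner ℝ (diffL d.1 u) (diffL d.1 u) := by
    have : 0 ≤ ∑ d : StepZ N, inner ℝ (diffL d.1 u) (diffL d.1 u) :=
      Finset.sum_nonneg fun d _ => real_inner_self_nonneg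
    positivity
  have h2 : c * ‖u‖ ^ 2 ≤ inner ℝ (mulL m C hC hm u) u := by
    rw [H1.norm_sq, ← tsum_mul_left, H1.inner_def]
    refine Summable.tsum_le_tsum (fun x => ?_) ((H1.summable_sq u).mul_left c)
      (H1.summable_mul _ _)
    rw [mulL_apply]
    nlinarith [sq_nonneg (u x), hc x]
  linarith

theorem periodic_all {N : ℕ} {β : Type*} (T : ℕ) (P : (Fin N → ℤ) → β)
    (hP : ∀ (x : Fin N → ℤ) (i : Fin N), P (Function.update x i (x i + T)) = P x)
    (k : Fin N → ℤ) (x : Fin N → ℤ) : P (x + (T : ℤ) • k) = P x := by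
  let G : AddSubgroup (Fin N → ℤ) :=
    { carrier := {k | ∀ x, P (x + (T : ℤ) • k) = P x}
      zero_mem' := fun x => by simp
      add_mem' := fun {k l} hk hl x => by
        rw [smul_add, ← add_assoc, hl, hk]
      neg_mem' := fun {k} hk x => by
        rw [← hk (x + (T : ℤ) • -k)]
        congr 1
        simp }
  have hs : ∀ i, Pi.single i (1 : ℤ) ∈ G := fun i x => by
    rw [← hP x i]
    congr 1
    ext j
    by_cases hj : j = i
    · subst hj; simp
    · simp [hj]
  have : k ∈ G := by
    have e : k = ∑ i, k i • Pi.single i (1 : ℤ) := by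
      ext j
      simp [Finset.sum_apply, Pi.single_apply]
    rw [e]
    exact G.sum_mem fun i _ => G.zsmul_mem (hs i) _
  exact this x

/-- the fundamental cell -/
noncomputable def cellZ (N T : ℕ) : Finset (Fin N → ℤ) := Finset.Icc (fun _ => 0) (fun _ => (T : ℤ))

theorem cell_decomp {N T : ℕ} (hT : 0 < T) (x : Fin N → ℤ) :
    ∃ y ∈ cellZ N T, ∃ k : Fin N → ℤ, y + (T : ℤ) • k = x := by
  have hT' : (0 : ℤ) < T := by exact_mod_cast hT
  refine ⟨fun i => x i % T, ?_, fun i => x i / T, ?_⟩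
  · rw [cellZ, Finset.mem_Icc]
    exact ⟨fun i => Int.emod_nonneg _ hT'.ne', fun i => (Int.emod_lt_of_pos _ hT').le⟩
  · ext i
    simp [Int.emod_add_mul_ediv]

theorem main_aux (N : ℕ) (T : ℕ) (hT : 0 < T)
    (f F : (Fin N → ℤ) → ℝ → ℝ) (h : FH f F)
    (Vp : (Fin N → ℤ) → ℝ)
    (hVper : ∀ (k x : Fin N → ℤ), Vp (x + (T : ℤ) • k) = Vp x)
    (hfper : ∀ (k x : Fin N → ℤ), f (x + (T : ℤ) • k) = f x)
    (hFper : ∀ (k x : Fin N → ℤ), F (x + (T : ℤ) • k) = F x)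
    (hVpos : ∀ x, 0 < Vp x) :
    ∃ u : H1 (Fin N → ℤ), u ≠ 0 ∧ fderiv ℝ (PhiF (adjZ N) Vp F) u = 0 ∧
      PhiF (adjZ N) Vp F u = sInf (PhiF (adjZ N) Vp F '' Nehari (adjZ N) Vp F) := by
  have hKne : (cellZ N T).Nonempty := by
    obtain ⟨y, hy, -⟩ := cell_decomp hT (0 : Fin N → ℤ)
    exact ⟨y, hy⟩
  obtain ⟨y₁, -, h1⟩ := (cellZ N T).exists_min_image Vp hKne
  obtain ⟨y₂, -, h2⟩ := (cellZ N T).exists_max_image Vp hKne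
  have hlow : ∀ x, Vp y₁ ≤ Vp x := fun x => by
    obtain ⟨y, hy, k, rfl⟩ := cell_decomp hT x
    rw [hVper]; exact h1 y hy
  have hup : ∀ x, |Vp x| ≤ Vp y₂ := fun x => by
    obtain ⟨y, hy, k, rfl⟩ := cell_decomp hT x
    rw [hVper, abs_of_pos (hVpos y)]; exact h2 y hy
  set A := opA N Vp (Vp y₂) (hVpos y₂).le hup with hAdef
  have hA : ∀ u v, inner ℝ (A u) v = inner ℝ (A v) u := opA_symm N Vp _ _ hup
  have hself := opA_self N Vp _ (hVpos y₂).le hup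
  have hPh : PhiF (adjZ N) Vp F = Ph A F := by
    funext u
    unfold PhiF Ph
    rw [hself u]
  have hinv : ∀ (k : Fin N → ℤ) (u : H1 (Fin N → ℤ)),
      inner ℝ (A (compL (Equiv.addRight ((T : ℤ) • k)) u)) (compL (Equiv.addRight ((T : ℤ) • k)) u)
        = inner ℝ (A u) u := by
    intro k u
    rw [hself, hself, ← (Equiv.addRight ((T : ℤ) • k)).tsum_eq
      (fun x => gradSq (adjZ N) (fun y => u y) x + Vp x * (u x) ^ 2)]
    refine tsum_congr fun x => ?_
    rw [gradSq_eq, gradSq_eq]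
    simp only [compL_apply, Equiv.coe_addRight]
    rw [hVper]
    congr 2
    refine Finset.sum_congr rfl fun d _ => ?_
    rw [add_right_comm]
  have hFinv : ∀ (k : Fin N → ℤ) (u : H1 (Fin N → ℤ)),
      ∑' x, F x (compL (Equiv.addRight ((T : ℤ) • k)) u x) = ∑' x, F x (u x) := by
    intro k u
    rw [← (Equiv.addRight ((T : ℤ) • k)).tsum_eq (fun x => F x (u x))]
    refine tsum_congr fun x => ?_
    simp only [compL_apply, Equiv.coe_addRight]
    rw [hFper]
  have hNinv : ∀ (k : Fin N → ℤ) (u : H1 (Fin N → ℤ)),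
      inner ℝ (Nem h (compL (Equiv.addRight ((T : ℤ) • k)) u))
        (compL (Equiv.addRight ((T : ℤ) • k)) u) = inner ℝ (Nem h u) u := by
    intro k u
    rw [H1.inner_def, H1.inner_def, ← (Equiv.addRight ((T : ℤ) • k)).tsum_eq (fun x => Nem h u x * u x)]
    refine tsum_congr fun x => ?_
    simp only [Nem_apply, compL_apply, Equiv.coe_addRight]
    rw [hfper]
  obtain ⟨u, hu, hu0, hmin⟩ := exists_ground h hA (hVpos y₁)
    (opA_coer N Vp _ (hVpos y₂).le hup _ hlow) (cellZ N T) (by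
      intro u hu x
      obtain ⟨y, hy, k, rfl⟩ := cell_decomp hT x
      refine ⟨compL (Equiv.addRight ((T : ℤ) • k)) u, ⟨?_, ?_⟩, ?_, y, hy, rfl⟩
      · intro h0
        apply hu.1
        ext z
        have := congrArg (fun w : H1 (Fin N → ℤ) => w (z - (T : ℤ) • k)) h0
        simpa [compL_apply] using this
      · have := hu.2
        rw [gr, inner_sub_left] at this ⊢
        rw [hinv, hNinv]
        exact this
      · unfold Ph
        rw [hinv, hFinv])
  have hfd : ∀ w, fderiv ℝ (Ph A F) w = innerSL ℝ (gr A h w) :=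
    fun w => (hasFDerivAt_Ph h hA w).fderiv
  have hNeh : Nehari (adjZ N) Vp F = {w | Neh A h w} := by
    ext w
    simp only [Nehari, Neh, Set.mem_setOf_eq, hPh, hfd, innerSL_apply_apply]
  refine ⟨u, hu.1, ?_, ?_⟩
  · rw [hPh, hfd, hu0, map_zero]
  · rw [hNeh, hPh]
    symm
    refine IsLeast.csInf_eq ⟨⟨u, hu, rfl⟩, ?_⟩
    rintro _ ⟨w, hw, rfl⟩
    exact hmin w hw

end Concrete

end Aux

/-- Theorem 1.1: existence of a ground state for `−Δu + V(x)u = f(x,u)` on `ℤ^N`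
with `T`-periodic positive potential and `T`-periodic nonlinearity. -/
theorem stmt0 (N : ℕ) (hN : 1 ≤ N) (T : ℕ) (hT : 0 < T)
    (f : (Fin N → ℤ) → ℝ → ℝ) (hcont : ∀ x, Continuous (f x))
    (a q : ℝ) (ha : 0 < a) (hq : 2 < q)
    (hgrowth : ∀ x t, |f x t| ≤ a * (|t| + |t| ^ (q - 1)))
    (Vp : (Fin N → ℤ) → ℝ)
    (hVper : ∀ (x : Fin N → ℤ) (i : Fin N), Vp (Function.update x i (x i + T)) = Vp x)
    (hfper : ∀ (x : Fin N → ℤ) (i : Fin N) (t : ℝ),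
      f (Function.update x i (x i + T)) t = f x t)
    (hVpos : ∀ x, 0 < Vp x)
    (hsmall : ∀ ε > 0, ∃ δ > 0, ∀ x t, t ≠ 0 → |t| < δ → |f x t| ≤ ε * |t|)
    (hmono : ∀ x, StrictMonoOn (fun t => f x t / |t|) (Set.Iio 0) ∧
             StrictMonoOn (fun t => f x t / |t|) (Set.Ioi 0))
    (F : (Fin N → ℤ) → ℝ → ℝ) (hF : ∀ x t, F x t = ∫ s in (0:ℝ)..t, f x s)
    (hsuper : ∀ M : ℝ, ∃ R > 0, ∀ x t, R ≤ |t| → M ≤ F x t / t ^ 2) :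
    ∃ u : H1 (Fin N → ℤ), u ≠ 0 ∧ fderiv ℝ (PhiF (adjZ N) Vp F) u = 0 ∧
      PhiF (adjZ N) Vp F u = sInf (PhiF (adjZ N) Vp F '' Nehari (adjZ N) Vp F) := by
  refine main_aux N T hT f F (FH_of f hcont a q ha hq hgrowth hsmall hmono F hF hsuper) Vp
    (periodic_all T Vp hVper)
    (periodic_all T f fun x i => funext fun t => hfper x i t)
    (periodic_all T F fun x i => funext fun t => ?_) hVpos
  rw [hF, hF]
  simp only [hfper]
end

section
/- In the Nehari setting, let I(u) = Σ_x F(x,u(x)) on H¹(V), which is Fréchet differentiable with I'(u)w = Σ_x f(x,u(x))w(x). Then I'(u) = o(‖u‖) as u → 0: the operator norm of I'(u) divided by ‖u‖ tends to 0 as ‖u‖ → 0. -/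
open scoped ENNReal

theorem aux_sq {Vtx : Type*} (u : H1 Vtx) :
    Summable (fun x => (u x)^2) ∧ ∑' x, (u x)^2 = ‖u‖^2 := by
  have h := lp.hasSum_norm (p := 2) (by norm_num) u
  simp only [ENNReal.toReal_ofNat, Real.rpow_ofNat, Real.norm_eq_abs, sq_abs] at h
  exact ⟨h.summable, h.tsum_eq⟩

theorem aux_cs {Vtx : Type*} (u w : H1 Vtx) :
    Summable (fun x => |u x| * |w x|) ∧ ∑' x, |u x| * |w x| ≤ ‖u‖ * ‖w‖ := by
  have h := lp.tsum_mul_le_mul_norm (p := 2) (q := 2)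
    (by simpa using Real.HolderConjugate.two_two) u w
  simpa only [Real.norm_eq_abs] using h

theorem aux_le {Vtx : Type*} (u : H1 Vtx) (x : Vtx) : |u x| ≤ ‖u‖ := by
  have h := lp.norm_apply_le_norm (p := 2) (by norm_num) u x
  simpa only [Real.norm_eq_abs] using h

theorem aux_sigma {Vtx : Type*} (adj : Vtx → Vtx → Prop) (D : ℕ)
    (hfin : ∀ x, {y | adj x y}.Finite)
    (hdeg : ∀ x, {y | adj x y}.ncard ≤ D) (u : Vtx → ℝ) (hu : Summable (fun x => (u x)^2)) :
    Summable (fun p : (Σ x : Vtx, {y : Vtx // adj x y}) => (u p.1)^2) := by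
  rw [summable_sigma_of_nonneg (fun _ => sq_nonneg _)]
  have hf : ∀ x, Finite {y : Vtx // adj x y} := fun x => (hfin x).to_subtype
  refine ⟨fun x => by have := hf x; exact Summable.of_finite, ?_⟩
  refine Summable.of_nonneg_of_le (fun x => tsum_nonneg fun _ => sq_nonneg _) (fun x => ?_)
    (hu.mul_left (D : ℝ))
  change ∑' _ : {y : Vtx // adj x y}, (u x)^2 ≤ _
  rw [tsum_const, nsmul_eq_mul]
  refine mul_le_mul_of_nonneg_right ?_ (sq_nonneg _)
  exact_mod_cast hdeg x

theorem aux_grad {Vtx : Type*} (adj : Vtx → Vtx → Prop) (D : ℕ)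
    (hsym : ∀ x y, adj x y → adj y x)
    (hfin : ∀ x, {y | adj x y}.Finite)
    (hdeg : ∀ x, {y | adj x y}.ncard ≤ D) (u : Vtx → ℝ) (hu : Summable (fun x => (u x)^2)) :
    Summable (fun x => gradSq adj u x) := by
  have h1 := aux_sigma adj D hfin hdeg u hu
  have h2 : Summable (fun p : (Σ x : Vtx, {y : Vtx // adj x y}) => (u p.2.1)^2) := by
    refine h1.comp_injective (i := fun p : (Σ x : Vtx, {y : Vtx // adj x y}) =>
      (⟨p.2.1, p.1, hsym _ _ p.2.2⟩ : (Σ x : Vtx, {y : Vtx // adj x y}))) ?_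
    rintro ⟨x, y, hy⟩ ⟨x2, y2, hy2⟩ hp
    have hp1 := congrArg (fun p : (Σ x : Vtx, {y : Vtx // adj x y}) => p.1) hp
    have hp2 := congrArg (fun p : (Σ x : Vtx, {y : Vtx // adj x y}) => p.2.1) hp
    dsimp only at hp1 hp2
    subst hp1
    subst hp2
    rfl
  have h3 : Summable (fun p : (Σ x : Vtx, {y : Vtx // adj x y}) =>
      (u p.2.1 - u p.1) * (u p.2.1 - u p.1)) := by
    refine Summable.of_nonneg_of_le (fun p => mul_self_nonneg _) (fun p => ?_)
      ((h1.add h2).mul_left 2)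
    nlinarith [sq_nonneg (u p.2.1 + u p.1)]
  have h4 := ((summable_sigma_of_nonneg (fun p => mul_self_nonneg _)).1 h3).2
  unfold gradSq gammaProd
  exact h4.mul_left (1/2)

theorem aux_nrm {Vtx : Type*} (adj : Vtx → Vtx → Prop) (D : ℕ)
    (hsym : ∀ x y, adj x y → adj y x)
    (hfin : ∀ x, {y | adj x y}.Finite)
    (hdeg : ∀ x, {y | adj x y}.ncard ≤ D)
    (Vp : Vtx → ℝ) (C1 C2 : ℝ) (hC1 : 0 < C1)
    (hVbd : ∀ x, C1 ≤ Vp x ∧ Vp x ≤ C2) (u : H1 Vtx) :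
    √C1 * ‖u‖ ≤ nrmH adj Vp u := by
  unfold nrmH nrmV
  apply Real.le_sqrt_of_sq_le
  rw [mul_pow, Real.sq_sqrt hC1.le, ← (aux_sq u).2, ← tsum_mul_left]
  have hg := aux_grad adj D hsym hfin hdeg (fun y => u y) (aux_sq u).1
  have hs := (aux_sq u).1
  have hV : Summable (fun x => Vp x * (u x)^2) :=
    Summable.of_nonneg_of_le
      (fun x => mul_nonneg (hC1.le.trans (hVbd x).1) (sq_nonneg _))
      (fun x => mul_le_mul_of_nonneg_right (hVbd x).2 (sq_nonneg _)) (hs.mul_left C2)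
  refine Summable.tsum_le_tsum (fun x => ?_) (hs.mul_left C1) (hg.add hV)
  have h0 : 0 ≤ gradSq adj (fun y => u y) x := by
    unfold gradSq gammaProd
    exact mul_nonneg (by norm_num) (tsum_nonneg fun _ => mul_self_nonneg _)
  have := mul_le_mul_of_nonneg_right (hVbd x).1 (sq_nonneg (u x))
  linarith

theorem aux_F (f F : ℝ → ℝ) (hcont : Continuous f) (hF : ∀ t, F t = ∫ s in (0:ℝ)..t, f s)
    (c r : ℝ) (hc : 0 ≤ c) (h : ∀ t, |t| ≤ r → |f t| ≤ c * |t|) (a b : ℝ) (hr : |a| + |b| ≤ r) :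
    |F (a + b) - F a| ≤ c * (|a| + |b|) * |b| := by
  have h1 : F (a + b) - F a = ∫ s in a..(a+b), f s := by
    rw [hF, hF]
    exact intervalIntegral.integral_interval_sub_left (hcont.intervalIntegrable _ _)
      (hcont.intervalIntegrable _ _)
  rw [h1]
  have := intervalIntegral.norm_integral_le_of_norm_le_const (a := a) (b := a + b) (f := f)
    (C := c * (|a| + |b|)) (fun t ht => ?_)
  · simpa using this
  · have ht' : |t| ≤ |a| + |b| := by
      have h2 := Set.abs_sub_left_of_mem_uIcc (Set.uIoc_subset_uIcc ht)
      have h3 : |t| ≤ |a| + |t - a| := by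
        have := abs_add_le a (t - a); simpa using this
      simp only [add_sub_cancel_left] at h2
      linarith
    exact (h t (ht'.trans hr)).trans (mul_le_mul_of_nonneg_left ht' hc)

theorem aux_deriv {Vtx : Type*}
    (f : Vtx → ℝ → ℝ) (hcont : ∀ x, Continuous (f x))
    (hloc : ∀ r : ℝ, ∃ c, 0 ≤ c ∧ ∀ x t, |t| ≤ r → |f x t| ≤ c * |t|)
    (hsmall : ∀ ε > 0, ∃ δ > 0, ∀ x t, |t| < δ → |f x t| ≤ ε * |t|)
    (F : Vtx → ℝ → ℝ) (hF : ∀ x t, F x t = ∫ s in (0:ℝ)..t, f x s) (u : H1 Vtx) :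
    ∃ L : H1 Vtx →L[ℝ] ℝ, (∀ w, L w = ∑' x, f x (u x) * w x) ∧
      HasFDerivAt (fun v : H1 Vtx => ∑' x, F x (v x)) L u := by
  have hF0 : ∀ x, F x 0 = 0 := fun x => by rw [hF]; simp
  have hFs : ∀ v : H1 Vtx, Summable (fun x => F x (v x)) := by
    intro v
    obtain ⟨c, hc, h⟩ := hloc ‖v‖
    refine Summable.of_norm_bounded ((aux_sq v).1.mul_left c) (fun x => ?_)
    have := aux_F (f x) (F x) (hcont x) (hF x) c ‖v‖ hc (h x) 0 (v x) (by simpa using aux_le v x)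
    simp only [zero_add, abs_zero, hF0, sub_zero, mul_assoc, abs_mul_abs_self] at this
    simpa [sq] using this
  obtain ⟨c, hc, hcu⟩ := hloc ‖u‖
  have hcu' : ∀ x, |f x (u x)| ≤ c * |u x| := fun x => hcu x _ (aux_le u x)
  have hmem : Memℓp (fun x => f x (u x)) 2 := by
    apply memℓp_gen
    simp only [ENNReal.toReal_ofNat, Real.rpow_ofNat, Real.norm_eq_abs]
    refine Summable.of_nonneg_of_le (fun x => sq_nonneg _) (fun x => ?_)
      ((aux_sq u).1.mul_left (c^2))
    calc |f x (u x)|^2 ≤ (c * |u x|)^2 := pow_le_pow_left₀ (abs_nonneg _) (hcu' x) 2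
      _ = c^2 * (u x)^2 := by rw [mul_pow, sq_abs]
  let g : H1 Vtx := ⟨fun x => f x (u x), hmem⟩
  have hgs : ∀ w : H1 Vtx, Summable (fun x => f x (u x) * w x) := by
    intro w
    refine Summable.of_norm_bounded (aux_cs g w).1 (fun x => ?_)
    rw [Real.norm_eq_abs, abs_mul]
  have hL : ∀ w, innerSL ℝ g w = ∑' x, f x (u x) * w x := by
    intro w
    rw [innerSL_apply_apply, lp.inner_eq_tsum]
    refine tsum_congr fun x => ?_
    simp [g, mul_comm]
  refine ⟨innerSL ℝ g, hL, ?_⟩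
  rw [hasFDerivAt_iff_isLittleO_nhds_zero, Asymptotics.isLittleO_iff]
  intro ε hε
  set K : ℝ := 2 * (2 * ‖u‖ + 1) with hK
  have hKpos : 0 < K := by positivity
  obtain ⟨δ, hδ, hsm⟩ := hsmall (ε / K) (by positivity)
  have hS : {x | δ / 2 ≤ |u x|}.Finite := by
    have h := (aux_sq u).1.tendsto_cofinite_zero
    have h2 := h.eventually (gt_mem_nhds (show (0:ℝ) < (δ/2)^2 by positivity))
    refine (Filter.eventually_cofinite.1 h2).subset (fun x hx => ?_)
    simp only [Set.mem_ofPred_eq] at hx ⊢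
    rw [not_lt, ← sq_abs (u x)]
    exact pow_le_pow_left₀ (by positivity) hx 2
  set S := hS.toFinset with hSdef
  set η : ℝ := ε / (2 * (S.card + 1)) with hη
  have hηpos : 0 < η := by positivity
  have hev : ∀ x, ∃ d > 0, ∀ h : ℝ, |h| < d →
      |F x (u x + h) - F x (u x) - f x (u x) * h| ≤ η * |h| := by
    intro x
    have hd : HasDerivAt (F x) (f x (u x)) (u x) := by
      have := intervalIntegral.integral_hasDerivAt_right ((hcont x).intervalIntegrable 0 (u x))
        ((hcont x).stronglyMeasurableAtFilter _ _) (hcont x).continuousAt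
      rwa [← (funext (hF x) : F x = _)] at this
    rw [hasDerivAt_iff_isLittleO_nhds_zero, Asymptotics.isLittleO_iff] at hd
    obtain ⟨d, hd0, h⟩ := Metric.eventually_nhds_iff.1 (hd hηpos)
    refine ⟨d, hd0, fun t ht => ?_⟩
    have := h (y := t) (by simpa using ht)
    simpa [mul_comm] using this
  choose d hd0 hd using hev
  have hevS : ∀ᶠ h : H1 Vtx in nhds 0, ∀ x ∈ S, ‖h‖ < d x := by
    rw [Filter.eventually_all_finset]
    intro x _
    have : Filter.Tendsto (fun h : H1 Vtx => ‖h‖) (nhds 0) (nhds 0) := tendsto_norm_zero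
    exact this.eventually (gt_mem_nhds (hd0 x))
  have hev1 : ∀ᶠ h : H1 Vtx in nhds 0, ‖h‖ < min 1 (δ/2) := by
    have : Filter.Tendsto (fun h : H1 Vtx => ‖h‖) (nhds 0) (nhds 0) := tendsto_norm_zero
    exact this.eventually (gt_mem_nhds (by positivity))
  filter_upwards [hevS, hev1] with h hhS hh1
  have hh1' : ‖h‖ < 1 := hh1.trans_le (min_le_left _ _)
  have hh2 : ‖h‖ < δ/2 := hh1.trans_le (min_le_right _ _)
  rw [hL]
  have e1 : ∑' x, F x ((u + h) x) - ∑' x, F x (u x) - ∑' x, f x (u x) * h x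
      = ∑' x, (F x (u x + h x) - F x (u x) - f x (u x) * h x) := by
    have t1 := ((hFs (u+h)).sub (hFs u)).tsum_sub (hgs h)
    have t2 := (hFs (u+h)).tsum_sub (hFs u)
    exact ((congrArg (fun z => z - ∑' x, f x (u x) * h x) t2).symm.trans t1.symm)
  rw [e1]
  classical
  have b1 : Summable (fun x => ε / K * (2 * (|u x| * |h x|) + |h x| * |h x|)) :=
    (((aux_cs u h).1.mul_left 2).add (aux_cs h h).1).mul_left _
  have b2 : HasSum (fun x => if x ∈ S then η * ‖h‖ else 0) (∑ x ∈ S, η * ‖h‖) := by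
    have := hasSum_sum_of_ne_finset_zero (L := SummationFilter.unconditional Vtx) (f := fun x => if x ∈ S then η * ‖h‖ else 0) (s := S)
      (fun x hx => by simp [hx])
    convert this using 1
    exact Finset.sum_congr rfl (fun x hx => by simp [hx])
  have hb : ∀ x, ‖F x (u x + h x) - F x (u x) - f x (u x) * h x‖ ≤
      ε / K * (2 * (|u x| * |h x|) + |h x| * |h x|) + (if x ∈ S then η * ‖h‖ else 0) := by
    intro x
    have hhx := aux_le h x
    rw [Real.norm_eq_abs]
    by_cases hx : x ∈ S
    · rw [if_pos hx]
      have h1 := hd x (h x) (hhx.trans_lt (hhS x hx))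
      have h2 : η * |h x| ≤ η * ‖h‖ := mul_le_mul_of_nonneg_left hhx hηpos.le
      have h3 : 0 ≤ ε / K * (2 * (|u x| * |h x|) + |h x| * |h x|) := by positivity
      linarith
    · rw [if_neg hx, add_zero]
      have hux : |u x| < δ / 2 := by
        by_contra hcon
        exact hx (hS.mem_toFinset.2 (not_lt.1 hcon))
      have h1 := aux_F (f x) (F x) (hcont x) (hF x) (ε / K) (|u x| + |h x|) (by positivity)
        (fun t ht => hsm x t (by linarith)) (u x) (h x) le_rfl
      have h2 : |f x (u x) * h x| ≤ ε / K * |u x| * |h x| := by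
        rw [abs_mul]
        exact mul_le_mul_of_nonneg_right (hsm x _ (by linarith)) (abs_nonneg _)
      have h3 := abs_sub (F x (u x + h x) - F x (u x)) (f x (u x) * h x)
      calc _ ≤ _ := h3
        _ ≤ _ := add_le_add h1 h2
        _ = _ := by ring
  have hfinal := tsum_of_norm_bounded (b1.add b2.summable).hasSum hb
  refine hfinal.trans ?_
  rw [b1.tsum_add b2.summable, b2.tsum_eq, tsum_mul_left,
    ((aux_cs u h).1.mul_left 2).tsum_add (aux_cs h h).1, tsum_mul_left, Finset.sum_const,
    nsmul_eq_mul]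
  have c1 := (aux_cs u h).2
  have c2 := (aux_cs h h).2
  have hn : 0 ≤ ‖h‖ := norm_nonneg _
  have hun : 0 ≤ ‖u‖ := norm_nonneg _
  have d1 : ε / K * (2 * (∑' x, |u x| * |h x|) + ∑' x, |h x| * |h x|) ≤ ε / 2 * ‖h‖ := by
    have : ε / K * (2 * (∑' x, |u x| * |h x|) + ∑' x, |h x| * |h x|)
        ≤ ε / K * ((2 * ‖u‖ + 1) * ‖h‖) := by
      refine mul_le_mul_of_nonneg_left ?_ (by positivity)
      nlinarith
    refine this.trans (le_of_eq ?_)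
    rw [hK]; field_simp
  have d2 : (S.card : ℝ) * (η * ‖h‖) ≤ ε / 2 * ‖h‖ := by
    rw [← mul_assoc]
    refine mul_le_mul_of_nonneg_right ?_ hn
    rw [hη, mul_div_assoc', div_le_div_iff₀ (by positivity) (by norm_num)]
    nlinarith
  linarith

/-- Proposition 3.2 (i): `I(u) = Σ_x F(x,u(x))` is Fréchet differentiable with
`I'(u)w = Σ_x f(x,u(x))w(x)`, and `I'(u) = o(‖u‖)` as `u → 0` (operator norm with respect
to the `V`-norm). -/
theorem stmt5
    {Vtx : Type*} (adj : Vtx → Vtx → Prop) (D : ℕ)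
    (hsym : ∀ x y, adj x y → adj y x)
    (hirr : ∀ x, ¬ adj x x)
    (hfin : ∀ x, {y | adj x y}.Finite)
    (hdeg : ∀ x, {y | adj x y}.ncard ≤ D)
    (Vp : Vtx → ℝ) (C1 C2 : ℝ) (hC1 : 0 < C1)
    (hVbd : ∀ x, C1 ≤ Vp x ∧ Vp x ≤ C2)
    (f : Vtx → ℝ → ℝ) (hcont : ∀ x, Continuous (f x))
    (a q : ℝ) (ha : 0 < a) (hq : 2 < q)
    (hgrowth : ∀ x t, |f x t| ≤ a * (|t| + |t| ^ (q - 1)))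
    (hsmall : ∀ ε > 0, ∃ δ > 0, ∀ x t, t ≠ 0 → |t| < δ → |f x t| ≤ ε * |t|)
    (hmono : ∀ x, StrictMonoOn (fun t => f x t / |t|) (Set.Iio 0) ∧
             StrictMonoOn (fun t => f x t / |t|) (Set.Ioi 0))
    (F : Vtx → ℝ → ℝ) (hF : ∀ x t, F x t = ∫ s in (0:ℝ)..t, f x s)
    (hsuper : ∀ M : ℝ, ∃ R > 0, ∀ x t, R ≤ |t| → M ≤ F x t / t ^ 2)
    :
    (∀ u : H1 Vtx, DifferentiableAt ℝ (fun v : H1 Vtx => ∑' x, F x (v x)) u) ∧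
    (∀ u w : H1 Vtx,
      fderiv ℝ (fun v : H1 Vtx => ∑' x, F x (v x)) u w = ∑' x, f x (u x) * w x) ∧
    (∀ ε > 0, ∃ δ > 0, ∀ u w : H1 Vtx, nrmH adj Vp u < δ →
      |∑' x, f x (u x) * w x| ≤ ε * nrmH adj Vp u * nrmH adj Vp w) := by
  have hs' : ∀ ε > 0, ∃ δ > 0, ∀ x t, |t| < δ → |f x t| ≤ ε * |t| := by
    intro ε hε
    obtain ⟨δ, hδ, h⟩ := hsmall ε hε
    refine ⟨δ, hδ, fun x t ht => ?_⟩
    by_cases h0 : t = 0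
    · subst h0
      have := hgrowth x 0
      rw [abs_zero, Real.zero_rpow (by linarith)] at this
      simpa using this
    · exact h x t h0 ht
  have hloc : ∀ r : ℝ, ∃ c, 0 ≤ c ∧ ∀ x t, |t| ≤ r → |f x t| ≤ c * |t| := by
    intro r
    refine ⟨a * (1 + |r| ^ (q - 2)), by positivity, fun x t ht => (hgrowth x t).trans ?_⟩
    have h1 : |t| ^ (q - 1) = |t| ^ (q - 2) * |t| := by
      by_cases h0 : t = 0
      · subst h0
        rw [abs_zero, Real.zero_rpow (by linarith), mul_zero]
      · rw [← Real.rpow_add_one (abs_pos.2 h0).ne']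
        congr 1; ring
    rw [h1, mul_assoc, add_mul, one_mul]
    have h2 : |t| ^ (q - 2) ≤ |r| ^ (q - 2) :=
      Real.rpow_le_rpow (abs_nonneg _) (ht.trans (le_abs_self r)) (by linarith)
    have := mul_le_mul_of_nonneg_right h2 (abs_nonneg t)
    exact mul_le_mul_of_nonneg_left (by linarith) ha.le
  have key := aux_deriv f hcont hloc hs' F hF
  refine ⟨fun u => ?_, fun u w => ?_, fun ε hε => ?_⟩
  · obtain ⟨L, -, h⟩ := key u
    exact h.differentiableAt
  · obtain ⟨L, hL, h⟩ := key u
    rw [h.fderiv, hL]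
  · obtain ⟨δ, hδ, hsm⟩ := hs' (ε * C1) (by positivity)
    have hn := aux_nrm adj D hsym hfin hdeg Vp C1 C2 hC1 hVbd
    have hsq : 0 < √C1 := Real.sqrt_pos.2 hC1
    refine ⟨√C1 * δ, by positivity, fun u w hu => ?_⟩
    have hud : ‖u‖ < δ := lt_of_mul_lt_mul_left ((hn u).trans_lt hu) hsq.le
    have hb : ∀ x, ‖f x (u x) * w x‖ ≤ ε * C1 * (|u x| * |w x|) := by
      intro x
      rw [Real.norm_eq_abs, abs_mul, ← mul_assoc]
      exact mul_le_mul_of_nonneg_right (hsm x _ ((aux_le u x).trans_lt hud)) (abs_nonneg _)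
    have h1 := tsum_of_norm_bounded ((aux_cs u w).1.mul_left (ε * C1)).hasSum hb
    rw [tsum_mul_left] at h1
    have h2 : ε * C1 * ∑' x, |u x| * |w x| ≤ ε * C1 * (‖u‖ * ‖w‖) :=
      mul_le_mul_of_nonneg_left (aux_cs u w).2 (by positivity)
    have h3 : (√C1 * ‖u‖) * (√C1 * ‖w‖) ≤ nrmH adj Vp u * nrmH adj Vp w :=
      mul_le_mul (hn u) (hn w) (by positivity) (le_trans (by positivity) (hn u))
    have h4 : (√C1 * ‖u‖) * (√C1 * ‖w‖) = C1 * (‖u‖ * ‖w‖) := by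
      have := Real.mul_self_sqrt hC1.le
      calc _ = (√C1 * √C1) * (‖u‖ * ‖w‖) := by ring
        _ = _ := by rw [this]
    rw [h4] at h3
    calc _ ≤ _ := h1
      _ ≤ _ := h2
      _ = ε * (C1 * (‖u‖ * ‖w‖)) := by ring
      _ ≤ ε * (nrmH adj Vp u * nrmH adj Vp w) := mul_le_mul_of_nonneg_left h3 hε.le
      _ = _ := by ring
end

section
/- In the Nehari setting, let I(u) = Σ_x F(x,u(x)) with I'(u)w = Σ_x f(x,u(x))w(x). Then for every u ∈ H¹(V) with u ≠ 0, the map s ↦ I'(su)u / s is strictly increasing on (0,∞): for all 0 < s < t one has I'(su)u/s < I'(tu)u/t. -/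
open scoped ENNReal

/-- Proposition 3.2 (ii): for `u ≠ 0`, the map `s ↦ I'(su)u/s` is strictly increasing
on `(0,∞)`, where `I'(su)u = Σ_x f(x,su(x))u(x)`. -/
theorem stmt6
    {Vtx : Type*} (adj : Vtx → Vtx → Prop) (D : ℕ)
    (hsym : ∀ x y, adj x y → adj y x)
    (hirr : ∀ x, ¬ adj x x)
    (hfin : ∀ x, {y | adj x y}.Finite)
    (hdeg : ∀ x, {y | adj x y}.ncard ≤ D)
    (Vp : Vtx → ℝ) (C1 C2 : ℝ) (hC1 : 0 < C1)
    (hVbd : ∀ x, C1 ≤ Vp x ∧ Vp x ≤ C2)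
    (f : Vtx → ℝ → ℝ) (hcont : ∀ x, Continuous (f x))
    (a q : ℝ) (ha : 0 < a) (hq : 2 < q)
    (hgrowth : ∀ x t, |f x t| ≤ a * (|t| + |t| ^ (q - 1)))
    (hsmall : ∀ ε > 0, ∃ δ > 0, ∀ x t, t ≠ 0 → |t| < δ → |f x t| ≤ ε * |t|)
    (hmono : ∀ x, StrictMonoOn (fun t => f x t / |t|) (Set.Iio 0) ∧
             StrictMonoOn (fun t => f x t / |t|) (Set.Ioi 0))
    (F : Vtx → ℝ → ℝ) (hF : ∀ x t, F x t = ∫ s in (0:ℝ)..t, f x s)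
    (hsuper : ∀ M : ℝ, ∃ R > 0, ∀ x t, R ≤ |t| → M ≤ F x t / t ^ 2)
    :
    ∀ u : H1 Vtx, u ≠ 0 → ∀ s t : ℝ, 0 < s → s < t →
      (∑' x, f x (s * u x) * u x) / s < (∑' x, f x (t * u x) * u x) / t := by
  intro u hu s t hs hst
  have ht : 0 < t := hs.trans hst
  have hu2 : Summable (fun x => (u x) ^ 2) := by
    have h := (lp.memℓp u).summable (by norm_num)
    simpa using h
  have hsum : ∀ r : ℝ, 0 < r → Summable (fun x => f x (r * u x) * u x / r) := by
    intro r hr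
    refine Summable.of_norm_bounded
      (g := fun x => (a * (1 + (r * ‖u‖) ^ (q - 2))) * (u x) ^ 2) (hu2.mul_left _) ?_
    intro x
    have hM : |u x| ≤ ‖u‖ := by
      have := lp.norm_apply_le_norm (p := 2) (by norm_num) u x
      simpa using this
    have hg := hgrowth x (r * u x)
    have hpow : |r * u x| ^ (q - 1) ≤ |r * u x| * (r * ‖u‖) ^ (q - 2) := by
      by_cases h0 : u x = 0
      · rw [h0]
        simp [Real.zero_rpow (show q - 1 ≠ 0 by linarith)]
      · have hp : 0 < |r * u x| := abs_pos.mpr (mul_ne_zero hr.ne' h0)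
        have e : |r * u x| ^ (q - 1) = |r * u x| * |r * u x| ^ (q - 2) := by
          rw [show q - 1 = 1 + (q - 2) by ring, Real.rpow_add hp, Real.rpow_one]
        rw [e]
        refine mul_le_mul_of_nonneg_left ?_ hp.le
        refine Real.rpow_le_rpow hp.le ?_ (by linarith)
        rw [abs_mul, abs_of_pos hr]
        exact mul_le_mul_of_nonneg_left hM hr.le
    have hb : |f x (r * u x)| ≤ (a * (1 + (r * ‖u‖) ^ (q - 2))) * (r * |u x|) := by
      have h1 : |r * u x| = r * |u x| := by rw [abs_mul, abs_of_pos hr]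
      calc _ ≤ _ := hg
        _ ≤ a * (|r * u x| + |r * u x| * (r * ‖u‖) ^ (q - 2)) := by gcongr
        _ = _ := by rw [h1]; ring
    rw [Real.norm_eq_abs, abs_div, abs_mul, abs_of_pos hr, div_le_iff₀ hr]
    calc _ ≤ (a * (1 + (r * ‖u‖) ^ (q - 2))) * (r * |u x|) * |u x| := by gcongr
      _ = (a * (1 + (r * ‖u‖) ^ (q - 2))) * (|u x| ^ 2) * r := by ring
      _ = _ := by rw [sq_abs]
  have hlt : ∀ x, u x ≠ 0 → f x (s * u x) * u x / s < f x (t * u x) * u x / t := by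
    intro x hx
    have key : ∀ r : ℝ, 0 < r →
        f x (r * u x) * u x / r = f x (r * u x) / |r * u x| * (u x * |u x|) := by
      intro r hr
      have : |u x| ≠ 0 := abs_ne_zero.mpr hx
      rw [abs_mul, abs_of_pos hr]
      field_simp
    rw [key s hs, key t ht]
    rcases lt_or_gt_of_ne hx with h | h
    · have := (hmono x).1 (show t * u x ∈ Set.Iio 0 from mul_neg_of_pos_of_neg ht h)
        (show s * u x ∈ Set.Iio 0 from mul_neg_of_pos_of_neg hs h)
        (mul_lt_mul_of_neg_right hst h)
      exact mul_lt_mul_of_neg_right this (mul_neg_of_neg_of_pos h (abs_pos.mpr hx))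
    · have := (hmono x).2 (show s * u x ∈ Set.Ioi 0 from mul_pos hs h)
        (show t * u x ∈ Set.Ioi 0 from mul_pos ht h)
        (mul_lt_mul_of_pos_right hst h)
      exact mul_lt_mul_of_pos_right this (mul_pos h (abs_pos.mpr hx))
  obtain ⟨x0, hx0⟩ : ∃ x, u x ≠ 0 := by
    by_contra! hc
    exact hu (lp.ext (funext hc))
  rw [← tsum_div_const, ← tsum_div_const]
  refine Summable.tsum_lt_tsum (i := x0) ?_ (hlt x0 hx0) (hsum s hs) (hsum t ht)
  intro x
  by_cases h : u x = 0
  · simp [h]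
  · exact (hlt x h).le
end

section
/- In the Nehari setting, let I(u) = Σ_x F(x,u(x)). Then I(su)/s² → ∞ as s → ∞ uniformly on weakly compact subsets of H¹(V)\{0}: for every subset W of H¹(V)\{0} that is compact in the weak topology of the Hilbert space H¹(V) and every M > 0, there exists K > 0 such that I(su)/s² > M for all s > K and all u ∈ W. -/
open scoped ENNReal

lemma aux_sign (g : ℝ → ℝ)
    (hsmall : ∀ ε > 0, ∃ δ > 0, ∀ t : ℝ, t ≠ 0 → |t| < δ → |g t| ≤ ε * |t|)
    (hmono : StrictMonoOn (fun t => g t / |t|) (Set.Iio 0) ∧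
             StrictMonoOn (fun t => g t / |t|) (Set.Ioi 0)) :
    (∀ t, 0 < t → 0 ≤ g t) ∧ (∀ t, t < 0 → g t ≤ 0) := by
  constructor
  · intro t ht
    by_contra! h
    have he : 0 < -(g t / t) := by
      have := div_neg_of_neg_of_pos h ht
      linarith
    obtain ⟨δ, hδ, H⟩ := hsmall _ he
    have hm : 0 < min t δ := lt_min ht hδ
    set r := min t δ / 2 with hr
    have hr0 : 0 < r := by positivity
    have hrt : r < t := by have := min_le_left t δ; linarith
    have hrd : r < δ := by have := min_le_right t δ; linarith
    have h1 := H r hr0.ne' (by rwa [abs_of_pos hr0])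
    have h2 := hmono.2 (Set.mem_Ioi.2 hr0) (Set.mem_Ioi.2 ht) hrt
    simp only [abs_of_pos hr0, abs_of_pos ht] at h1 h2
    rw [div_lt_iff₀ hr0] at h2
    have h3 := neg_abs_le (g r)
    linarith
  · intro t ht
    by_contra! h
    have ht' : 0 < -t := by linarith
    have he : 0 < g t / |t| := div_pos h (abs_pos.2 ht.ne)
    obtain ⟨δ, hδ, H⟩ := hsmall _ he
    have hm : 0 < min (-t) δ := lt_min ht' hδ
    set r := min (-t) δ / 2 with hr
    have hr0 : 0 < r := by positivity
    have hrt : r < -t := by have := min_le_left (-t) δ; linarith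
    have hrd : r < δ := by have := min_le_right (-t) δ; linarith
    have h1 := H (-r) (by linarith) (by rwa [abs_neg, abs_of_pos hr0])
    have h2 := hmono.1 (Set.mem_Iio.2 ht) (Set.mem_Iio.2 (neg_lt_zero.2 hr0)) (by linarith)
    simp only [abs_neg, abs_of_pos hr0] at h1 h2
    rw [lt_div_iff₀ hr0] at h2
    have h3 := le_abs_self (g (-r))
    linarith

lemma aux_int_nonneg (g : ℝ → ℝ)
    (h : (∀ t, 0 < t → 0 ≤ g t) ∧ (∀ t, t < 0 → g t ≤ 0)) (h0 : g 0 = 0) (t : ℝ) :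
    0 ≤ ∫ s in (0:ℝ)..t, g s := by
  rcases le_total 0 t with ht | ht
  · refine intervalIntegral.integral_nonneg ht ?_
    intro s hs
    rcases hs.1.eq_or_lt with e | e
    · rw [← e, h0]
    · exact h.1 s e
  · rw [intervalIntegral.integral_symm, ← intervalIntegral.integral_neg]
    refine intervalIntegral.integral_nonneg ht ?_
    intro s hs
    rcases hs.2.eq_or_lt with e | e
    · rw [e, h0, neg_zero]
    · have := h.2 s e
      linarith

lemma aux_int_bound (g : ℝ → ℝ) (δ : ℝ) (h0 : g 0 = 0)
    (h : ∀ t : ℝ, t ≠ 0 → |t| < δ → |g t| ≤ 1 * |t|) (t : ℝ) (ht : |t| < δ) :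
    ‖∫ s in (0:ℝ)..t, g s‖ ≤ t ^ 2 := by
  have := intervalIntegral.norm_integral_le_of_norm_le_const (a := 0) (b := t) (f := g)
    (C := |t|) ?_
  · rwa [sub_zero, abs_mul_abs_self, ← sq] at this
  · intro s hs
    have hst : |s| ≤ |t| := by
      have := Set.abs_sub_left_of_mem_uIcc (Set.uIoc_subset_uIcc hs)
      simpa using this
    rcases eq_or_ne s 0 with e | e
    · rw [e, h0]; simp
    · have := h s e (hst.trans_lt ht)
      rw [Real.norm_eq_abs]
      linarith

lemma aux_summable {Vtx : Type*} (u : H1 Vtx) : Summable (fun x => (u x) ^ 2) := by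
  have h := (memℓp_gen_iff (p := 2) (by simp)).1 (lp.memℓp u)
  simpa using h

lemma aux_compact {Vtx : Type*} (W : Set (H1 Vtx)) (hW : W ⊆ {u | u ≠ 0})
    (hc : IsCompact ((toWeakSpace ℝ (H1 Vtx)) '' W)) :
    ∃ c > 0, ∀ u ∈ W, ∃ x, c < |u x| := by
  have key : ∃ c > 0, ∀ w ∈ (toWeakSpace ℝ (H1 Vtx)) '' W,
      ∃ x, c < |((toWeakSpace ℝ (H1 Vtx)).symm w) x| := by
    refine hc.induction_on (p := fun S => ∃ c > 0, ∀ w ∈ S,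
      ∃ x, c < |((toWeakSpace ℝ (H1 Vtx)).symm w) x|) ?_ ?_ ?_ ?_
    · exact ⟨1, one_pos, by simp⟩
    · rintro s t hst ⟨c, hc, h⟩
      exact ⟨c, hc, fun w hw => h w (hst hw)⟩
    · rintro s t ⟨c, hc, h⟩ ⟨d, hd, k⟩
      refine ⟨min c d, lt_min hc hd, ?_⟩
      rintro w (hw | hw)
      · obtain ⟨x, hx⟩ := h w hw
        exact ⟨x, (min_le_left _ _).trans_lt hx⟩
      · obtain ⟨x, hx⟩ := k w hw
        exact ⟨x, (min_le_right _ _).trans_lt hx⟩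
    · rintro _ ⟨u, hu, rfl⟩
      have hne : u ≠ 0 := hW hu
      have : ∃ x, u x ≠ 0 := by
        by_contra! h
        exact hne (by ext x; simpa using h x)
      obtain ⟨x, hx⟩ := this
      have hcont : Continuous (fun w : WeakSpace ℝ (H1 Vtx) =>
          ((toWeakSpace ℝ (H1 Vtx)).symm w) x) :=
        WeakBilin.eval_continuous (topDualPairing ℝ (H1 Vtx)).flip
          (lp.evalCLM ℝ (fun _ : Vtx => ℝ) 2 x)
      have hpos : 0 < |u x| := abs_pos.2 hx
      refine ⟨{w | |u x| / 2 < |((toWeakSpace ℝ (H1 Vtx)).symm w) x|}, ?_,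
        |u x| / 2, by positivity, fun w hw => ⟨x, hw⟩⟩
      apply mem_nhdsWithin_of_mem_nhds
      apply (isOpen_lt continuous_const hcont.abs).mem_nhds
      simp only [Set.mem_ofPred_eq, LinearEquiv.symm_apply_apply]
      linarith
  obtain ⟨c, hc0, h⟩ := key
  exact ⟨c, hc0, fun u hu => by simpa using h _ ⟨u, hu, rfl⟩⟩

/-- Proposition 3.2 (iii): `I(su)/s² → ∞` as `s → ∞`, uniformly on weakly compact
subsets of `H¹(V)\{0}`, where `I(u) = Σ_x F(x,u(x))`. -/
theorem stmt7
    {Vtx : Type*} (adj : Vtx → Vtx → Prop) (D : ℕ)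
    (hsym : ∀ x y, adj x y → adj y x)
    (hirr : ∀ x, ¬ adj x x)
    (hfin : ∀ x, {y | adj x y}.Finite)
    (hdeg : ∀ x, {y | adj x y}.ncard ≤ D)
    (Vp : Vtx → ℝ) (C1 C2 : ℝ) (hC1 : 0 < C1)
    (hVbd : ∀ x, C1 ≤ Vp x ∧ Vp x ≤ C2)
    (f : Vtx → ℝ → ℝ) (hcont : ∀ x, Continuous (f x))
    (a q : ℝ) (ha : 0 < a) (hq : 2 < q)
    (hgrowth : ∀ x t, |f x t| ≤ a * (|t| + |t| ^ (q - 1)))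
    (hsmall : ∀ ε > 0, ∃ δ > 0, ∀ x t, t ≠ 0 → |t| < δ → |f x t| ≤ ε * |t|)
    (hmono : ∀ x, StrictMonoOn (fun t => f x t / |t|) (Set.Iio 0) ∧
             StrictMonoOn (fun t => f x t / |t|) (Set.Ioi 0))
    (F : Vtx → ℝ → ℝ) (hF : ∀ x t, F x t = ∫ s in (0:ℝ)..t, f x s)
    (hsuper : ∀ M : ℝ, ∃ R > 0, ∀ x t, R ≤ |t| → M ≤ F x t / t ^ 2)
    :
    ∀ W : Set (H1 Vtx), W ⊆ {u | u ≠ 0} →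
      IsCompact ((toWeakSpace ℝ (H1 Vtx)) '' W) →
      ∀ M > 0, ∃ K > 0, ∀ s : ℝ, K < s → ∀ u ∈ W,
        M < (∑' x, F x (s * u x)) / s ^ 2 := by
  intro W hW hc M hM
  obtain ⟨c, hc0, hcW⟩ := aux_compact W hW hc
  have hf0 : ∀ x, f x 0 = 0 := by
    intro x
    have := hgrowth x 0
    rw [abs_zero, Real.zero_rpow (by linarith)] at this
    simpa using this
  have hsign : ∀ x, (∀ t, 0 < t → 0 ≤ f x t) ∧ (∀ t, t < 0 → f x t ≤ 0) := by
    intro x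
    refine aux_sign (f x) ?_ (hmono x)
    intro ε hε
    obtain ⟨δ, hδ, H⟩ := hsmall ε hε
    exact ⟨δ, hδ, H x⟩
  have hFnn : ∀ x t, 0 ≤ F x t := by
    intro x t
    rw [hF]
    exact aux_int_nonneg (f x) (hsign x) (hf0 x) t
  obtain ⟨δ, hδ, Hδ⟩ := hsmall 1 one_pos
  have hsum : ∀ (s : ℝ) (u : H1 Vtx), Summable (fun x => F x (s * u x)) := by
    intro s u
    have h1 : Summable (fun x => (s * u x) ^ 2) := by
      simp only [mul_pow]
      exact (aux_summable u).mul_left _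
    refine Summable.of_norm_bounded_eventually h1 ?_
    filter_upwards [h1.tendsto_cofinite_zero.eventually_lt_const
      (show (0:ℝ) < δ ^ 2 by positivity)] with x hx
    rw [hF]
    exact aux_int_bound (f x) δ (hf0 x) (Hδ x) _ (abs_lt_of_sq_lt_sq hx hδ.le)
  obtain ⟨R, hR, HR⟩ := hsuper ((M + 1) / c ^ 2)
  refine ⟨R / c, by positivity, ?_⟩
  intro s hs u hu
  have hs0 : 0 < s := lt_trans (by positivity) hs
  obtain ⟨x, hx⟩ := hcW u hu
  have hsc : R < s * c := (div_lt_iff₀ hc0).1 hs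
  have habs : |s * u x| = s * |u x| := by rw [abs_mul, abs_of_pos hs0]
  have hlt : s * c < |s * u x| := by rw [habs]; exact mul_lt_mul_of_pos_left hx hs0
  have h1 := HR x (s * u x) (by linarith)
  have hsq : (s * c) ^ 2 ≤ (s * u x) ^ 2 := by
    rw [← sq_abs (s * u x)]
    exact pow_le_pow_left₀ (by positivity) hlt.le 2
  have hsqpos : 0 < (s * u x) ^ 2 := lt_of_lt_of_le (by positivity) hsq
  rw [le_div_iff₀ hsqpos] at h1
  have h2 : (M + 1) / c ^ 2 * (s * c) ^ 2 ≤ (M + 1) / c ^ 2 * (s * u x) ^ 2 :=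
    mul_le_mul_of_nonneg_left hsq (by positivity)
  have h3 : (M + 1) / c ^ 2 * (s * c) ^ 2 = (M + 1) * s ^ 2 := by
    field_simp
  have h4 : F x (s * u x) ≤ ∑' y, F y (s * u y) :=
    (hsum s u).le_tsum x (fun y _ => hFnn y _)
  rw [lt_div_iff₀ (by positivity)]
  have : 0 < s ^ 2 := by positivity
  linarith
end
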